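/- arXiv:2305.12919 — 2 statements merged into one kernel-verified Lean document; each statement's English description precedes it below -/
import Mathlib

section
/- Let P be a compact packing of the Euclidean plane by disks whose radii take finitely many values, with at least two distinct radii occurring, and let r_min and r_max denote the smallest and largest radii used. Then r_min / r_max ≤ 2√2/√(5 − √5) − 1. -/
open Metric Set

noncomputable section

/-- The Euclidean plane. -/
abbrev Plane : Type := EuclideanSpace ℝ (Fin 2)

/-- A closed disk in the plane, given by its center and (positive) radius. -/
structure Disk where
  center : Plane
  radius : ℝ
  radius_pos : 0 < radius

/-- The set of points of a disk (a closed ball). -/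
def Disk.set (d : Disk) : Set Plane := closedBall d.center d.radius

/-- A packing: a family of closed disks with pairwise disjoint interiors. -/
def IsPacking (P : Set Disk) : Prop :=
  ∀ d ∈ P, ∀ d' ∈ P, d ≠ d' → Disjoint (interior d.set) (interior d'.set)

/-- Two disks are (externally) tangent: they intersect in exactly one point. -/
def Disk.Tangent (d d' : Disk) : Prop :=
  dist d.center d'.center = d.radius + d'.radius

/-- The union of the disks of a packing. -/
def packingUnion (P : Set Disk) : Set Plane := ⋃ d ∈ P, d.set

/-- A packing is compact (triangulated) if every connected component of the
complement of the union of the disks is bounded and its closure meets exactly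
three of the disks, these three disks being pairwise tangent. -/
def IsCompactPacking (P : Set Disk) : Prop :=
  IsPacking P ∧
  ∀ x ∈ (packingUnion P)ᶜ,
    Bornology.IsBounded (connectedComponentIn (packingUnion P)ᶜ x) ∧
    ∃ d₁ d₂ d₃ : Disk, d₁ ∈ P ∧ d₂ ∈ P ∧ d₃ ∈ P ∧
      d₁ ≠ d₂ ∧ d₁ ≠ d₃ ∧ d₂ ≠ d₃ ∧
      d₁.Tangent d₂ ∧ d₁.Tangent d₃ ∧ d₂.Tangent d₃ ∧
      {d ∈ P | (closure (connectedComponentIn (packingUnion P)ᶜ x) ∩ d.set).Nonempty}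
        = {d₁, d₂, d₃}

/-- A packing uses the radius `r` if one of its disks has radius `r`. -/
def UsesRadius (P : Set Disk) (r : ℝ) : Prop := ∃ d ∈ P, d.radius = r

/-- All radii of the disks of `P` belong to `S`. -/
def RadiiIn (P : Set Disk) (S : Set ℝ) : Prop := ∀ d ∈ P, d.radius ∈ S

/-- The square `[-r, r]²`. -/
def square (r : ℝ) : Set Plane := {x | |x 0| ≤ r ∧ |x 1| ≤ r}

/-- The density of a packing: the limsup, as `r → ∞`, of the proportion of the
square `[-r, r]²` covered by the disks. -/
def density (P : Set Disk) : ℝ :=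
  Filter.limsup
    (fun r : ℝ => (MeasureTheory.volume (packingUnion P ∩ square r)).toReal / (4 * r ^ 2))
    Filter.atTop

end

theorem packing_dist {P : Set Disk} (hP : IsPacking P) {d e : Disk} (hd : d ∈ P) (he : e ∈ P)
    (hne : d ≠ e) : d.radius + e.radius ≤ dist d.center e.center := by
  have h := hP d hd e he hne
  unfold Disk.set at h
  rw [interior_closedBall _ d.radius_pos.ne', interior_closedBall _ e.radius_pos.ne'] at h
  exact (disjoint_ball_ball_iff d.radius_pos e.radius_pos).1 h

theorem packing_closed {P Q : Set Disk} (hP : IsPacking P) (hQ : Q ⊆ P) {m M : ℝ} (hm : 0 < m)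
    (h1 : ∀ d ∈ P, m ≤ d.radius) (h2 : ∀ d ∈ P, d.radius ≤ M) :
    IsClosed (packingUnion Q) := by
  have hU : packingUnion Q = ⋃ d : Q, d.1.set := by
    unfold packingUnion
    rw [Set.biUnion_eq_iUnion]
  rw [hU]
  refine LocallyFinite.isClosed_iUnion ?_ (fun d => isClosed_closedBall)
  intro x
  refine ⟨ball x 1, ball_mem_nhds x one_pos, ?_⟩
  obtain ⟨t, -, htf, ht⟩ := finite_cover_balls_of_compact (isCompact_closedBall x (1 + M)) hm
  have hc : ∀ d : Q, (d.1.set ∩ ball x 1).Nonempty → ∃ y ∈ t, dist d.1.center y < m := by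
    rintro d ⟨z, hz1, hz2⟩
    have hz1' : dist z d.1.center ≤ d.1.radius := hz1
    have hz2' : dist z x < 1 := hz2
    have h3 := h2 d.1 (hQ d.2)
    have : d.1.center ∈ closedBall x (1 + M) := by
      rw [mem_closedBall]
      have := dist_triangle_left d.1.center x z
      linarith
    have := ht this
    simpa using this
  choose! f hf1 hf2 using hc
  refine Set.Finite.of_finite_image (f := f) (htf.subset ?_) ?_
  · rintro _ ⟨d, hd, rfl⟩
    exact hf1 d hd
  · intro d hd e he hde
    by_contra hne
    have h4 := packing_dist hP (hQ d.2) (hQ e.2) (fun h => hne (Subtype.ext h))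
    have h5 := hf2 d hd
    have h6 := hf2 e he
    rw [← hde] at h6
    have := dist_triangle_right d.1.center e.1.center (f d)
    have := h1 d.1 (hQ d.2)
    have := h1 e.1 (hQ e.2)
    linarith

theorem mem_packingUnion {P : Set Disk} {x : Plane} :
    x ∈ packingUnion P ↔ ∃ d ∈ P, dist x d.center ≤ d.radius := by
  simp [packingUnion, Disk.set]

/-- The component lies in the convex hull of the three centers. -/
theorem component_subset {P : Set Disk} (hcl : IsClosed (packingUnion P)) {x : Plane}
    (hb : Bornology.IsBounded (connectedComponentIn (packingUnion P)ᶜ x))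
    {T : Set Plane} (hTc : Convex ℝ T) (hTcl : IsClosed T) (hTne : T.Nonempty)
    (hT : ∀ d ∈ P, (closure (connectedComponentIn (packingUnion P)ᶜ x) ∩ d.set).Nonempty →
      d.center ∈ T) :
    connectedComponentIn (packingUnion P)ᶜ x ⊆ T := by
  intro y hy
  by_contra hyT
  set C := connectedComponentIn (packingUnion P)ᶜ x with hC
  have hCo : IsOpen C := hcl.isOpen_compl.connectedComponentIn
  have hCs : C ⊆ (packingUnion P)ᶜ := connectedComponentIn_subset _ _
  obtain ⟨v, hvT, hv⟩ := exists_norm_eq_iInf_of_complete_convex hTne hTcl.isComplete hTc y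
  rw [norm_eq_iInf_iff_real_inner_le_zero hTc hvT] at hv
  have hyv : y - v ≠ 0 := by
    intro h
    rw [sub_eq_zero] at h
    exact hyT (h ▸ hvT)
  let S : Set Plane := (fun t : ℝ => y + t • (y - v)) '' Ici 0
  have hSp : IsPreconnected S := by
    refine isPreconnected_Ici.image _ ?_
    fun_prop
  have hSd : ∀ t : ℝ, 0 ≤ t → ∀ c ∈ T, dist y c ≤ dist (y + t • (y - v)) c := by
    intro t ht c hc
    have h1 := hv c hc
    rw [dist_eq_norm, dist_eq_norm]
    have h2 : y + t • (y - v) - c = (y - c) + t • (y - v) := by abel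
    rw [h2]
    have h3 : 0 ≤ inner ℝ (y - c) (y - v) := by
      have : y - c = (y - v) - (c - v) := by abel
      rw [this, inner_sub_left, real_inner_self_eq_norm_sq, real_inner_comm]
      nlinarith [sq_nonneg ‖y - v‖]
    have h4 := norm_add_sq_real (y - c) (t • (y - v))
    rw [inner_smul_right] at h4
    refine le_of_sq_le_sq ?_ (norm_nonneg _)
    nlinarith [sq_nonneg ‖t • (y - v)‖, mul_nonneg ht h3]
  have hSC : S ⊆ C := by
    refine hSp.subset_of_closure_inter_subset hCo ⟨y, ⟨0, by simp, by simp⟩, hy⟩ ?_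
    rintro z ⟨hzC, t, ht, rfl⟩
    by_cases hz : y + t • (y - v) ∈ packingUnion P
    · exfalso
      obtain ⟨d, hd, hdz⟩ := mem_packingUnion.1 hz
      have hdT := hT d hd ⟨_, hzC, hdz⟩
      have h1 := hSd t ht _ hdT
      exact hCs hy (mem_packingUnion.2 ⟨d, hd, h1.trans hdz⟩)
    · have ho : IsOpen (connectedComponentIn (packingUnion P)ᶜ (y + t • (y - v))) :=
        hcl.isOpen_compl.connectedComponentIn
      have hm := mem_connectedComponentIn (F := (packingUnion P)ᶜ) hz
      obtain ⟨w, hw1, hw2⟩ := mem_closure_iff.1 hzC _ ho hm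
      rw [hC, connectedComponentIn_eq hw2, ← connectedComponentIn_eq hw1]
      exact hm
  obtain ⟨R, hR⟩ := (hb.subset hSC).subset_closedBall y
  have hn : 0 < ‖y - v‖ := norm_pos_iff.2 hyv
  have h1 : y + ((|R| + 1) / ‖y - v‖) • (y - v) ∈ closedBall y R :=
    hR ⟨_, by simp only [mem_Ici]; positivity, rfl⟩
  rw [mem_closedBall, dist_eq_norm, add_sub_cancel_left, norm_smul, Real.norm_of_nonneg (by positivity),
    div_mul_cancel₀ _ hn.ne'] at h1
  linarith [le_abs_self R]

/-- two disks of different classes being tangent -/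
theorem exists_tangent {P : Set Disk} (hP : IsCompactPacking P) {m M : ℝ} (hm : 0 < m)
    (h1 : ∀ d ∈ P, m ≤ d.radius) (h2 : ∀ d ∈ P, d.radius ≤ M)
    {D₀ E₀ : Disk} (hD₀ : D₀ ∈ P) (hE₀ : E₀ ∈ P) (hDm : D₀.radius = m) (hEm : m < E₀.radius) :
    ∃ D ∈ P, ∃ E ∈ P, D.radius = m ∧ m < E.radius ∧ D.Tangent E := by
  let P1 : Set Disk := {d ∈ P | d.radius = m}
  let P2 : Set Disk := {d ∈ P | m < d.radius}
  have hc1 : IsClosed (packingUnion P1) := packing_closed hP.1 (sep_subset _ _) hm h1 h2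
  have hc2 : IsClosed (packingUnion P2) := packing_closed hP.1 (sep_subset _ _) hm h1 h2
  have hcu : ∀ x, x ∈ packingUnion P → x ∈ packingUnion P1 ∨ x ∈ packingUnion P2 := by
    intro x hx
    obtain ⟨d, hd, hdx⟩ := mem_packingUnion.1 hx
    rcases (h1 d hd).eq_or_lt with h | h
    · exact Or.inl (mem_packingUnion.2 ⟨d, ⟨hd, h.symm⟩, hdx⟩)
    · exact Or.inr (mem_packingUnion.2 ⟨d, ⟨hd, h⟩, hdx⟩)
  let γ : ℝ → Plane := fun t => D₀.center + t • (E₀.center - D₀.center)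
  have hγ : Continuous γ := by fun_prop
  have hγ0 : γ 0 = D₀.center := by simp [γ]
  have hγ1 : γ 1 = E₀.center := by simp [γ]
  obtain ⟨t2, ⟨ht2, ht2'⟩, hmin⟩ :=
    (isCompact_Icc.inter_right (hc2.preimage hγ) : IsCompact (Icc (0:ℝ) 1 ∩ γ ⁻¹' packingUnion P2)).exists_isLeast
      ⟨1, by simp, mem_packingUnion.2 ⟨E₀, ⟨hE₀, hEm⟩, by rw [hγ1]; simpa using E₀.radius_pos.le⟩⟩
  obtain ⟨t1, ⟨ht1, ht1'⟩, hmax⟩ :=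
    (isCompact_Icc.inter_right (hc1.preimage hγ) : IsCompact (Icc (0:ℝ) t2 ∩ γ ⁻¹' packingUnion P1)).exists_isGreatest
      ⟨0, by simpa using ht2.1, mem_packingUnion.2 ⟨D₀, ⟨hD₀, hDm⟩, by rw [hγ0]; simpa using D₀.radius_pos.le⟩⟩
  obtain ⟨D, ⟨hD, hDr⟩, hDd⟩ := mem_packingUnion.1 ht1'
  obtain ⟨E, ⟨hE, hEr⟩, hEd⟩ := mem_packingUnion.1 ht2'
  refine ⟨D, hD, E, hE, hDr, hEr, ?_⟩
  have hDE : D ≠ E := by rintro rfl; linarith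
  rcases ht1.2.eq_or_lt with heq | hlt
  · have := packing_dist hP.1 hD hE hDE
    rw [heq] at hDd
    have h3 := dist_triangle_left D.center E.center (γ t2)
    exact le_antisymm (by linarith) this
  · have hfree : γ '' Ioo t1 t2 ⊆ (packingUnion P)ᶜ := by
      rintro _ ⟨t, ht, rfl⟩ hmem
      rcases hcu _ hmem with h | h
      · have := hmax ⟨⟨ht1.1.trans ht.1.le, ht.2.le⟩, h⟩
        exact absurd ht.1 (not_lt.2 this)
      · have := hmin ⟨⟨ht1.1.trans ht.1.le, ht.2.le.trans ht2.2⟩, h⟩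
        exact absurd ht.2 (not_lt.2 this)
    have hx0 : γ ((t1 + t2) / 2) ∈ γ '' Ioo t1 t2 := ⟨_, ⟨by linarith, by linarith⟩, rfl⟩
    obtain ⟨-, d₁, d₂, d₃, -, -, -, -, -, -, h12, h13, h23, hset⟩ := hP.2 _ (hfree hx0)
    have hsub := (isPreconnected_Ioo.image γ hγ.continuousOn).subset_connectedComponentIn hx0 hfree
    have hcl : ∀ t ∈ Icc t1 t2, γ t ∈ closure (connectedComponentIn (packingUnion P)ᶜ (γ ((t1 + t2) / 2))) := by
      intro t ht
      refine closure_mono hsub (image_closure_subset_closure_image hγ ⟨t, ?_, rfl⟩)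
      rwa [closure_Ioo hlt.ne]
    have hDs : D ∈ ({d₁, d₂, d₃} : Set Disk) :=
      hset ▸ ⟨hD, γ t1, hcl _ ⟨le_rfl, hlt.le⟩, hDd⟩
    have hEs : E ∈ ({d₁, d₂, d₃} : Set Disk) :=
      hset ▸ ⟨hE, γ t2, hcl _ ⟨hlt.le, le_rfl⟩, hEd⟩
    simp only [mem_insert_iff, mem_singleton_iff] at hDs hEs
    have hsymm : ∀ a b : Disk, a.Tangent b → b.Tangent a := by
      intro a b h
      unfold Disk.Tangent at *
      rw [dist_comm, h, add_comm]
    rcases hDs with rfl | rfl | rfl <;> rcases hEs with rfl | rfl | rfl <;>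
      first
        | exact absurd rfl hDE
        | assumption
        | (apply hsymm; assumption)

/-- `E` is a disk of `P` tangent to `D`, its center being seen from `D` at angle `θ`. -/
def NbAngle (P : Set Disk) (D E : Disk) (θ : ℝ) : Prop :=
  E ∈ P ∧ E ≠ D ∧ E.center 0 = D.center 0 + (D.radius + E.radius) * Real.cos θ ∧
    E.center 1 = D.center 1 + (D.radius + E.radius) * Real.sin θ

theorem plane_dist_sq (x y : Plane) : dist x y ^ 2 = (x 0 - y 0) ^ 2 + (x 1 - y 1) ^ 2 := by
  rw [EuclideanSpace.dist_eq, Real.sq_sqrt (Finset.sum_nonneg fun _ _ => sq_nonneg _)]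
  simp [Fin.sum_univ_two, Real.dist_eq, sq_abs]

theorem polar_exists {P : Set Disk} {D E : Disk} (hE : E ∈ P) (hne : E ≠ D)
    (ht : D.Tangent E) (u : ℝ) :
    ∃ a, -Real.pi < a ∧ a ≤ Real.pi ∧ NbAngle P D E (u + a) := by
  unfold Disk.Tangent at ht
  have h1 := plane_dist_sq D.center E.center
  rw [ht] at h1
  set x := E.center 0 - D.center 0 with hx
  set y := E.center 1 - D.center 1 with hy
  have hρ : 0 < D.radius + E.radius := add_pos D.radius_pos E.radius_pos
  let z : ℂ := ⟨x * Real.cos u + y * Real.sin u, - x * Real.sin u + y * Real.cos u⟩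
  have hz : ‖z‖ = D.radius + E.radius := by
    refine (sq_eq_sq₀ (norm_nonneg _) hρ.le).1 ?_
    rw [← Complex.normSq_eq_norm_sq, Complex.normSq_apply, h1]
    have := Real.sin_sq_add_cos_sq u
    simp only [z]
    linear_combination (x ^ 2 + y ^ 2) * this
  have hc := Complex.norm_mul_cos_arg z
  have hs := Complex.norm_mul_sin_arg z
  rw [hz] at hc hs
  simp only [z] at hc hs
  refine ⟨Complex.arg z, Complex.neg_pi_lt_arg z, Complex.arg_le_pi z, hE, hne, ?_, ?_⟩
  · rw [Real.cos_add]
    have := Real.sin_sq_add_cos_sq u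
    linear_combination -x * this - Real.cos u * hc + Real.sin u * hs - hx
  · rw [Real.sin_add]
    have := Real.sin_sq_add_cos_sq u
    linear_combination -y * this - Real.sin u * hc - Real.cos u * hs - hy

theorem nb_dist_sq {P : Set Disk} {D E F : Disk} {θ φ : ℝ} (hE : NbAngle P D E θ)
    (hF : NbAngle P D F φ) :
    dist E.center F.center ^ 2 = (D.radius + E.radius) ^ 2 + (D.radius + F.radius) ^ 2
      - 2 * (D.radius + E.radius) * (D.radius + F.radius) * Real.cos (θ - φ) := by
  obtain ⟨-, -, h0, h1⟩ := hE
  obtain ⟨-, -, k0, k1⟩ := hF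
  rw [plane_dist_sq, h0, h1, k0, k1, Real.cos_sub]
  linear_combination (D.radius + E.radius) ^ 2 * Real.sin_sq_add_cos_sq θ +
    (D.radius + F.radius) ^ 2 * Real.sin_sq_add_cos_sq φ

theorem signs_aux {a b A B r : ℝ}
    (ha1 : -Real.pi < a) (ha2 : a ≤ Real.pi) (hb1 : -Real.pi < b) (hb2 : b ≤ Real.pi)
    (ha0 : a ≠ 0) (hb0 : b ≠ 0) (hA : 0 ≤ A) (hB : 0 ≤ B) (hr : 0 < r)
    (ec : A * Real.cos a + B * Real.cos b = r) (es : A * Real.sin a + B * Real.sin b = 0)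
    (hab : a ≤ b) : a < 0 ∧ 0 < b ∧ b - a < Real.pi := by
  have hpi := Real.pi_pos
  have hsx : ∀ x, -Real.pi < x → x ≤ Real.pi → x ≠ 0 → Real.sin x = 0 → Real.cos x = -1 := by
    intro x h1 h2 h3 h4
    rcases h2.eq_or_lt with rfl | h2
    · simp
    · exact absurd ((Real.sin_eq_zero_iff_of_lt_of_lt h1 h2).1 h4) h3
  have e1 : A * Real.sin (b - a) = r * Real.sin b := by
    rw [Real.sin_sub]; linear_combination Real.sin b * ec - Real.cos b * es
  have e2 : B * Real.sin (b - a) = - r * Real.sin a := by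
    rw [Real.sin_sub]; linear_combination -Real.sin a * ec + Real.cos a * es
  have hA' : 0 < A := by
    refine hA.lt_of_ne ?_
    rintro rfl
    have h : Real.sin b = 0 := by
      rw [zero_mul] at e1
      rcases mul_eq_zero.1 e1.symm with h | h
      · linarith
      · exact h
    have := hsx b hb1 hb2 hb0 h
    rw [this] at ec
    linarith
  have hB' : 0 < B := by
    refine hB.lt_of_ne ?_
    rintro rfl
    have h : Real.sin a = 0 := by
      rw [zero_mul] at e2
      rcases mul_eq_zero.1 e2.symm with h | h
      · linarith
      · exact h
    have := hsx a ha1 ha2 ha0 h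
    rw [this] at ec
    linarith
  have hbne : b ≠ Real.pi := by
    rintro rfl
    rw [Real.sin_pi] at es
    have h : Real.sin a = 0 := by
      have : A * Real.sin a = 0 := by linarith
      exact (mul_eq_zero.1 this).resolve_left hA'.ne'
    have := hsx a ha1 ha2 ha0 h
    rw [this, Real.cos_pi] at ec
    linarith
  have hb3 : b < Real.pi := hb2.lt_of_ne hbne
  have ha3 : a < 0 := by
    by_contra h
    have ha4 : 0 < a := lt_of_le_of_ne (not_lt.1 h) ha0.symm
    have h3 := Real.sin_pos_of_pos_of_lt_pi ha4 (hab.trans_lt hb3)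
    have h4 := Real.sin_pos_of_pos_of_lt_pi (ha4.trans_le hab) hb3
    nlinarith [mul_pos hA' h3, mul_pos hB' h4]
  have hb4 : 0 < b := by
    by_contra h
    have h5 : b < 0 := lt_of_le_of_ne (not_lt.1 h) hb0
    have h3 := Real.sin_neg_of_neg_of_neg_pi_lt ha3 ha1
    have h4 := Real.sin_neg_of_neg_of_neg_pi_lt h5 hb1
    nlinarith [mul_pos hA' (neg_pos.2 h3), mul_pos hB' (neg_pos.2 h4)]
  refine ⟨ha3, hb4, ?_⟩
  by_contra h
  have h4 := Real.sin_pos_of_pos_of_lt_pi hb4 hb3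
  have h5 : Real.sin (b - a) ≤ 0 := by
    have h6 : 0 ≤ Real.sin (b - a - Real.pi) :=
      Real.sin_nonneg_of_nonneg_of_le_pi (by linarith) (by linarith)
    rw [Real.sin_sub_pi] at h6
    linarith
  nlinarith [mul_pos hr h4, mul_nonneg hA (neg_nonneg.2 h5)]

theorem wedge_aux {P : Set Disk} {D E F : Disk} {u a b A B r : ℝ}
    (hEa : NbAngle P D E (u + a)) (hFb : NbAngle P D F (u + b))
    (hEF : dist E.center F.center = E.radius + F.radius)
    (hFE : dist F.center E.center = F.radius + E.radius)
    (ha1 : -Real.pi < a) (ha2 : a ≤ Real.pi) (hb1 : -Real.pi < b) (hb2 : b ≤ Real.pi)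
    (ha0 : a ≠ 0) (hb0 : b ≠ 0) (hA : 0 ≤ A) (hB : 0 ≤ B) (hr : 0 < r)
    (ec : A * Real.cos a + B * Real.cos b = r) (es : A * Real.sin a + B * Real.sin b = 0) :
    ∃ E F a b, NbAngle P D E (u + a) ∧ NbAngle P D F (u + b) ∧
      dist E.center F.center = E.radius + F.radius ∧ a < 0 ∧ 0 < b ∧ b - a < Real.pi := by
  rcases le_total a b with hab | hab
  · exact ⟨E, F, a, b, hEa, hFb, hEF,
      signs_aux ha1 ha2 hb1 hb2 ha0 hb0 hA hB hr ec es hab⟩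
  · exact ⟨F, E, b, a, hFb, hEa, hFE,
      signs_aux hb1 hb2 ha1 ha2 hb0 ha0 hB hA hr (by linarith) (by linarith) hab⟩

/-- Given a direction `u`, it is either the direction of a neighbour or lies in the wedge of
two mutually tangent neighbours. -/
theorem wedge {P : Set Disk} (hP : IsCompactPacking P) {m M : ℝ} (hm : 0 < m)
    (h1 : ∀ d ∈ P, m ≤ d.radius) (h2 : ∀ d ∈ P, d.radius ≤ M) {D : Disk} (hD : D ∈ P) (u : ℝ) :
    (∃ E, NbAngle P D E u) ∨ ∃ E F a b, NbAngle P D E (u + a) ∧ NbAngle P D F (u + b) ∧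
      dist E.center F.center = E.radius + F.radius ∧ a < 0 ∧ 0 < b ∧ b - a < Real.pi := by
  by_cases hu : ∃ E, NbAngle P D E u
  · exact Or.inl hu
  right
  have hr := D.radius_pos
  let w : Plane := !₂[Real.cos u, Real.sin u]
  have hw0 : w 0 = Real.cos u := rfl
  have hw1 : w 1 = Real.sin u := rfl
  let γ : ℝ → Plane := fun t => D.center + t • w
  have hγ : Continuous γ := by fun_prop
  have hγ0 : ∀ t, γ t 0 = D.center 0 + t * Real.cos u := fun t => by simp [γ, hw0]
  have hγ1 : ∀ t, γ t 1 = D.center 1 + t * Real.sin u := fun t => by simp [γ, hw1]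
  have hγd : ∀ t, 0 ≤ t → dist (γ t) D.center = t := by
    intro t ht
    refine (sq_eq_sq₀ dist_nonneg ht).1 ?_
    rw [plane_dist_sq, hγ0, hγ1]
    linear_combination t ^ 2 * Real.sin_sq_add_cos_sq u
  have hcl : IsClosed (packingUnion P) := packing_closed hP.1 subset_rfl hm h1 h2
  have hcl' : IsClosed (packingUnion (P \ {D})) := packing_closed hP.1 sdiff_subset hm h1 h2
  have hp : γ D.radius ∉ packingUnion (P \ {D}) := by
    intro h
    obtain ⟨G, ⟨hG, hGD⟩, hGd⟩ := mem_packingUnion.1 h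
    have hGD : G ≠ D := hGD
    have hdist := packing_dist hP.1 hD hG hGD.symm
    have htri := dist_triangle_left D.center G.center (γ D.radius)
    rw [hγd _ hr.le] at htri
    have e1 : dist D.center G.center = D.radius + G.radius := le_antisymm (by linarith) hdist
    have e2 : dist (γ D.radius) G.center = G.radius := le_antisymm hGd (by linarith)
    have f1 := plane_dist_sq D.center G.center
    have f2 := plane_dist_sq (γ D.radius) G.center
    rw [e1] at f1
    rw [e2, hγ0, hγ1] at f2
    apply hu
    have hcs := Real.sin_sq_add_cos_sq u
    have key : (G.center 0 - D.center 0 - (D.radius + G.radius) * Real.cos u) ^ 2 +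
        (G.center 1 - D.center 1 - (D.radius + G.radius) * Real.sin u) ^ 2 = 0 := by
      have hin : (G.center 0 - D.center 0) * Real.cos u + (G.center 1 - D.center 1) * Real.sin u
          = D.radius + G.radius := by
        have : 2 * D.radius * ((G.center 0 - D.center 0) * Real.cos u +
          (G.center 1 - D.center 1) * Real.sin u - (D.radius + G.radius)) = 0 := by
          linear_combination f2 - f1 + D.radius ^ 2 * hcs
        rcases mul_eq_zero.1 this with h | h
        · linarith
        · linarith
      linear_combination - f1 - 2 * (D.radius + G.radius) * hin + (D.radius + G.radius) ^ 2 * hcs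
    have k0 := sq_nonneg (G.center 0 - D.center 0 - (D.radius + G.radius) * Real.cos u)
    have k1 := sq_nonneg (G.center 1 - D.center 1 - (D.radius + G.radius) * Real.sin u)
    have l0 : G.center 0 - D.center 0 - (D.radius + G.radius) * Real.cos u = 0 :=
      pow_eq_zero_iff (two_ne_zero) |>.1 (by linarith)
    have l1 : G.center 1 - D.center 1 - (D.radius + G.radius) * Real.sin u = 0 :=
      pow_eq_zero_iff (two_ne_zero) |>.1 (by linarith)
    exact ⟨G, hG, hGD, by linarith, by linarith⟩
  obtain ⟨ε, hε, hball⟩ : ∃ ε > 0, ∀ t, dist t D.radius < ε → γ t ∉ packingUnion (P \ {D}) := by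
    have : ∀ᶠ t in nhds D.radius, γ t ∈ (packingUnion (P \ {D}))ᶜ :=
      hγ.continuousAt (hcl'.isOpen_compl.mem_nhds hp)
    exact Metric.eventually_nhds_iff.1 this
  have hlt : D.radius < D.radius + ε := by linarith
  have hfree : γ '' Ioo D.radius (D.radius + ε) ⊆ (packingUnion P)ᶜ := by
    rintro _ ⟨t, ht, rfl⟩ hmem
    obtain ⟨G, hG, hGd⟩ := mem_packingUnion.1 hmem
    by_cases hGD : G = D
    · subst hGD
      rw [hγd _ (hr.le.trans ht.1.le)] at hGd
      exact absurd ht.1 (not_lt.2 hGd)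
    · refine hball t ?_ (mem_packingUnion.2 ⟨G, ⟨hG, hGD⟩, hGd⟩)
      rw [Real.dist_eq, abs_of_pos (by linarith [ht.1])]
      linarith [ht.2]
  have hx0 : γ (D.radius + ε / 2) ∈ γ '' Ioo D.radius (D.radius + ε) :=
    ⟨_, ⟨by linarith, by linarith⟩, rfl⟩
  obtain ⟨hbd, d₁, d₂, d₃, hd1, hd2, hd3, n12, n13, n23, h12, h13, h23, hset⟩ := hP.2 _ (hfree hx0)
  have hsub := (isPreconnected_Ioo.image γ hγ.continuousOn).subset_connectedComponentIn hx0 hfree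
  have hpc : γ D.radius ∈ closure (connectedComponentIn (packingUnion P)ᶜ (γ (D.radius + ε / 2))) := by
    refine closure_mono hsub (image_closure_subset_closure_image hγ ⟨_, ?_, rfl⟩)
    rw [closure_Ioo hlt.ne]
    exact ⟨le_rfl, hlt.le⟩
  have hDs : D ∈ ({d₁, d₂, d₃} : Set Disk) :=
    hset ▸ ⟨hD, _, hpc, (hγd _ hr.le).le⟩
  have hsymm : ∀ a b : Disk, a.Tangent b → b.Tangent a := by
    intro a b h
    unfold Disk.Tangent at *
    rw [dist_comm, h, add_comm]
  obtain ⟨E, F, hE, hF, hED, hFD, tE, tF, tEF, hset'⟩ : ∃ E F : Disk, E ∈ P ∧ F ∈ P ∧ E ≠ D ∧ F ≠ D ∧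
      D.Tangent E ∧ D.Tangent F ∧ E.Tangent F ∧ ({d₁, d₂, d₃} : Set Disk) = {D, E, F} := by
    simp only [mem_insert_iff, mem_singleton_iff] at hDs
    rcases hDs with rfl | rfl | rfl
    · exact ⟨d₂, d₃, hd2, hd3, n12.symm, n13.symm, h12, h13, h23, rfl⟩
    · exact ⟨d₁, d₃, hd1, hd3, n12, n23.symm, hsymm _ _ h12, h23, h13, Set.insert_comm _ _ _⟩
    · refine ⟨d₁, d₂, hd1, hd2, n13, n23, hsymm _ _ h13, hsymm _ _ h23, h12, ?_⟩
      ext d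
      simp only [mem_insert_iff, mem_singleton_iff]
      tauto
  rw [hset'] at hset
  have hTcl : IsClosed (convexHull ℝ ({D.center, E.center, F.center} : Set Plane)) :=
    (Set.toFinite ({D.center, E.center, F.center} : Set Plane)).isClosed_convexHull ℝ
  have hCT := component_subset hcl hbd (convex_convexHull ℝ {D.center, E.center, F.center})
    hTcl ⟨D.center, subset_convexHull _ _ (by simp)⟩ (by
      intro d hd hdn
      have : d ∈ ({D, E, F} : Set Disk) := hset ▸ ⟨hd, hdn⟩
      refine subset_convexHull _ _ ?_
      simp only [mem_insert_iff, mem_singleton_iff] at this ⊢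
      rcases this with rfl | rfl | rfl <;> simp)
  have hpT := (closure_minimal hCT hTcl) hpc
  rw [convexHull_insert (by simp), convexHull_pair, mem_convexJoin] at hpT
  obtain ⟨x, hx, y, ⟨s, t, hs, ht, hst, rfl⟩, p, q, hp', hq, hpq, hpe⟩ := hpT
  rw [mem_singleton_iff] at hx
  subst hx
  obtain ⟨a, ha1, ha2, hEa⟩ := polar_exists hE hED tE u
  obtain ⟨b, hb1, hb2, hFb⟩ := polar_exists hF hFD tF u
  have hA0 : 0 ≤ q * s * (D.radius + E.radius) :=
    mul_nonneg (mul_nonneg hq hs) (add_pos hr E.radius_pos).le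
  have hB0 : 0 ≤ q * t * (D.radius + F.radius) :=
    mul_nonneg (mul_nonneg hq ht) (add_pos hr F.radius_pos).le
  have c0 := congrArg (fun v : Plane => v 0) hpe
  have c1 := congrArg (fun v : Plane => v 1) hpe
  simp only [hγ0, hγ1, PiLp.add_apply, PiLp.smul_apply, smul_eq_mul, hEa.2.2.1, hFb.2.2.1,
    hEa.2.2.2, hFb.2.2.2] at c0 c1
  have hpp : p = 1 - q := by linarith
  have hss : s = 1 - t := by linarith
  have hcs := Real.sin_sq_add_cos_sq u
  have hua : ∀ x, Real.cos (u + x) = Real.cos u * Real.cos x - Real.sin u * Real.sin x :=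
    fun x => Real.cos_add u x
  have hub : ∀ x, Real.sin (u + x) = Real.sin u * Real.cos x + Real.cos u * Real.sin x :=
    fun x => Real.sin_add u x
  rw [hua, hua] at c0
  rw [hub, hub] at c1
  generalize hA : q * s * (D.radius + E.radius) = A at hA0
  generalize hB : q * t * (D.radius + F.radius) = B at hB0
  have d0 : (A * Real.cos a + B * Real.cos b) * Real.cos u -
      (A * Real.sin a + B * Real.sin b) * Real.sin u = D.radius * Real.cos u := by
    rw [← hA, ← hB]; rw [hpp, hss] at c0; rw [hss]; linear_combination c0
  have d1 : (A * Real.cos a + B * Real.cos b) * Real.sin u +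
      (A * Real.sin a + B * Real.sin b) * Real.cos u = D.radius * Real.sin u := by
    rw [← hA, ← hB]; rw [hpp, hss] at c1; rw [hss]; linear_combination c1
  have ec : A * Real.cos a + B * Real.cos b = D.radius := by
    linear_combination Real.cos u * d0 + Real.sin u * d1 -
      (A * Real.cos a + B * Real.cos b - D.radius) * hcs
  have es : A * Real.sin a + B * Real.sin b = 0 := by
    linear_combination Real.cos u * d1 - Real.sin u * d0 - (A * Real.sin a + B * Real.sin b) * hcs
  have hEF : dist E.center F.center = E.radius + F.radius := tEF
  have hFE : dist F.center E.center = F.radius + E.radius := hsymm _ _ tEF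
  have ha0 : a ≠ 0 := by
    rintro rfl; rw [add_zero] at hEa; exact hu ⟨E, hEa⟩
  have hb0 : b ≠ 0 := by
    rintro rfl; rw [add_zero] at hFb; exact hu ⟨F, hFb⟩
  clear c0 c1 d0 d1 hpe hCT hTcl hset hset' hpc hsub hx0 hfree hball hA hB
  exact wedge_aux hEa hFb hEF hFE ha1 ha2 hb1 hb2 ha0 hb0 hA0 hB0 hr ec es

theorem nb_cos_le {P : Set Disk} (hP : IsPacking P) {D E F : Disk} {θ φ : ℝ}
    (hmin : ∀ d ∈ P, D.radius ≤ d.radius)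
    (hE : NbAngle P D E θ) (hF : NbAngle P D F φ) (hne : E ≠ F) :
    Real.cos (θ - φ) ≤ 1 / 2 ∧ (D.radius < E.radius → Real.cos (θ - φ) < 1 / 2) := by
  have h1 := nb_dist_sq hE hF
  have h2 := packing_dist hP hE.1 hF.1 hne
  have hm := D.radius_pos
  have ha := hmin E hE.1
  have hb := hmin F hF.1
  generalize D.radius = m at *
  generalize E.radius = a at *
  generalize F.radius = b at *
  generalize Real.cos (θ - φ) = c at *
  have h3 : (a + b) ^ 2 ≤ (m + a) ^ 2 + (m + b) ^ 2 - 2 * (m + a) * (m + b) * c := by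
    rw [← h1]; exact pow_le_pow_left₀ (by linarith) h2 2
  have hpos : 0 < (m + a) * (m + b) := mul_pos (by linarith) (by linarith)
  -- `2 (m+a)(m+b) (1-c) ≥ 4ab`
  have h4 : 2 * (a * b) ≤ (m + a) * (m + b) * (1 - c) := by nlinarith
  constructor
  · by_contra hc
    have hc : 1 / 2 < c := not_le.1 hc
    have h5 : (m + a) * (m + b) * (1 - c) < (m + a) * (m + b) * (1 / 2) :=
      mul_lt_mul_of_pos_left (by linarith) hpos
    nlinarith [mul_nonneg (sub_nonneg.2 ha) (sub_nonneg.2 hb), mul_nonneg hm.le (sub_nonneg.2 ha),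
      mul_nonneg hm.le (sub_nonneg.2 hb)]
  · intro ha'
    by_contra hc
    have hc : 1 / 2 ≤ c := not_lt.1 hc
    have h5 : (m + a) * (m + b) * (1 - c) ≤ (m + a) * (m + b) * (1 / 2) :=
      mul_le_mul_of_nonneg_left (by linarith) hpos.le
    nlinarith [mul_nonneg (sub_nonneg.2 ha) (sub_nonneg.2 hb), mul_pos hm (sub_pos.2 ha'),
      mul_nonneg hm.le (sub_nonneg.2 hb)]

theorem nb_cos_gt {P : Set Disk} {D E F : Disk} {θ φ M : ℝ}
    (hmax : ∀ d ∈ P, d.radius ≤ M)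
    (hE : NbAngle P D E θ) (hF : NbAngle P D F φ)
    (ht : dist E.center F.center = E.radius + F.radius)
    (hcon : 8 * M ^ 2 < (5 - Real.sqrt 5) * (D.radius + M) ^ 2) :
    Real.cos (2 * Real.pi / 5) < Real.cos (θ - φ) := by
  have hcos : Real.cos (2 * Real.pi / 5) = 1 - (5 - Real.sqrt 5) / 4 := by
    have : 2 * Real.pi / 5 = 2 * (Real.pi / 5) := by ring
    rw [this, Real.cos_two_mul, Real.cos_pi_div_five]
    have := Real.sq_sqrt (show (0:ℝ) ≤ 5 by norm_num)
    linear_combination this / 8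
  rw [hcos]
  have h1 := nb_dist_sq hE hF
  rw [ht] at h1
  have hm := D.radius_pos
  have ha := hmax E hE.1
  have hb := hmax F hF.1
  have ha0 := E.radius_pos
  have hb0 := F.radius_pos
  generalize D.radius = m at *
  generalize E.radius = a at *
  generalize F.radius = b at *
  generalize Real.cos (θ - φ) = c at *
  generalize 5 - Real.sqrt 5 = k at *
  have hM : 0 < M := by linarith
  have h4 : 2 * (a * b) = (m + a) * (m + b) * (1 - c) := by nlinarith
  by_contra hc
  have hc : k / 4 ≤ 1 - c := by linarith [not_lt.1 hc]
  have hpos : 0 < (m + a) * (m + b) := mul_pos (by linarith) (by linarith)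
  have h5 : (m + a) * (m + b) * (k / 4) ≤ 2 * (a * b) := by
    rw [h4]; exact mul_le_mul_of_nonneg_left hc hpos.le
  have h6 : a * (m + M) ≤ M * (m + a) := by nlinarith
  have h7 : b * (m + M) ≤ M * (m + b) := by nlinarith
  have h8 : (a * (m + M)) * (b * (m + M)) ≤ (M * (m + a)) * (M * (m + b)) :=
    mul_le_mul h6 h7 (mul_nonneg hb0.le (by linarith)) (mul_nonneg hM.le (by linarith))
  have h9 : (m + a) * (m + b) * (8 * M ^ 2) < (m + a) * (m + b) * (k * (m + M) ^ 2) :=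
    mul_lt_mul_of_pos_left hcon hpos
  have h10 : (m + a) * (m + b) * (k / 4) * (m + M) ^ 2 ≤ 2 * (a * b) * (m + M) ^ 2 :=
    mul_le_mul_of_nonneg_right h5 (sq_nonneg _)
  nlinarith

theorem nb_period {P : Set Disk} {D E : Disk} {θ : ℝ} (hE : NbAngle P D E θ) :
    NbAngle P D E (θ + 2 * Real.pi) := by
  obtain ⟨h1, h2, h3, h4⟩ := hE
  exact ⟨h1, h2, by rw [Real.cos_add_two_pi]; exact h3, by rw [Real.sin_add_two_pi]; exact h4⟩

theorem nb_sep {P : Set Disk} (hP : IsPacking P) {D E F : Disk} {θ φ : ℝ}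
    (hmin : ∀ d ∈ P, D.radius ≤ d.radius)
    (hE : NbAngle P D E θ) (hF : NbAngle P D F φ) (hlt : θ < φ) : θ + Real.pi / 3 ≤ φ := by
  by_contra h
  have hpi := Real.pi_pos
  have h := not_le.1 h
  have hc : 1 / 2 < Real.cos (φ - θ) := by
    rw [← Real.cos_pi_div_three]
    exact Real.cos_lt_cos_of_nonneg_of_le_pi (by linarith) (by linarith) (by linarith)
  have hc1 : Real.cos (φ - θ) < 1 := by
    rw [← Real.cos_zero]
    exact Real.cos_lt_cos_of_nonneg_of_le_pi le_rfl (by linarith) (by linarith)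
  by_cases hne : F = E
  · subst hne
    have := nb_dist_sq hF hE
    rw [dist_self] at this
    have hp : 0 < D.radius + F.radius := add_pos D.radius_pos F.radius_pos
    nlinarith [mul_pos (mul_pos hp hp) (sub_pos.2 hc1)]
  · linarith [(nb_cos_le hP hmin hF hE hne).1]

theorem nb_next {P : Set Disk} (hP : IsCompactPacking P) {D : Disk} (hD : D ∈ P) {M : ℝ}
    (hmin : ∀ d ∈ P, D.radius ≤ d.radius) (hmax : ∀ d ∈ P, d.radius ≤ M)
    (hcon : 8 * M ^ 2 < (5 - Real.sqrt 5) * (D.radius + M) ^ 2)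
    {G : Disk} {θ : ℝ} (hG : NbAngle P D G θ) :
    ∃ F φ, NbAngle P D F φ ∧ θ + Real.pi / 3 ≤ φ ∧ φ < θ + 2 * Real.pi / 5 ∧
      (D.radius < G.radius → θ + Real.pi / 3 < φ) := by
  have hpi := Real.pi_pos
  rcases wedge hP D.radius_pos hmin hmax hD (θ + Real.pi / 6) with
    ⟨E, hE⟩ | ⟨E, F, a, b, hE, hF, ht, ha, hb, hab⟩
  · have := nb_sep hP.1 hmin hG hE (by linarith)
    linarith
  have hba : b - a < 2 * Real.pi / 5 := by
    by_contra h
    have h := not_lt.1 h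
    have h1 := nb_cos_gt hmax hF hE (by rw [dist_comm, ht, add_comm]) hcon
    have h2 : Real.cos (b - a) ≤ Real.cos (2 * Real.pi / 5) :=
      Real.cos_le_cos_of_nonneg_of_le_pi (by linarith) hab.le h
    have h3 : θ + Real.pi / 6 + b - (θ + Real.pi / 6 + a) = b - a := by ring
    rw [h3] at h1
    linarith
  have hF1 := nb_sep hP.1 hmin hG hF (by linarith)
  have hE1 : θ = θ + Real.pi / 6 + a := by
    rcases lt_trichotomy θ (θ + Real.pi / 6 + a) with h | h | h
    · have := nb_sep hP.1 hmin hG hE h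
      linarith
    · exact h
    · have := nb_sep hP.1 hmin hE hG h
      linarith
  refine ⟨F, _, hF, hF1, by linarith, ?_⟩
  intro hlt
  refine hF1.lt_of_ne ?_
  intro heq
  by_cases hne : G = F
  · subst hne
    have := nb_dist_sq hG hF
    rw [dist_self, ← heq] at this
    have h3 : θ - (θ + Real.pi / 3) = - (Real.pi / 3) := by ring
    rw [h3, Real.cos_neg, Real.cos_pi_div_three] at this
    have hp : 0 < D.radius + G.radius := add_pos D.radius_pos G.radius_pos
    nlinarith [mul_pos hp hp]
  · have := (nb_cos_le hP.1 hmin hG hF hne).2 hlt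
    rw [← heq] at this
    have h3 : θ - (θ + Real.pi / 3) = - (Real.pi / 3) := by ring
    rw [h3, Real.cos_neg, Real.cos_pi_div_three] at this
    linarith

theorem main_ineq {P : Set Disk} (hP : IsCompactPacking P) {D E : Disk} (hD : D ∈ P) (hE : E ∈ P)
    {M : ℝ} (hmin : ∀ d ∈ P, D.radius ≤ d.radius) (hmax : ∀ d ∈ P, d.radius ≤ M)
    (hlt : D.radius < E.radius) (ht : D.Tangent E) :
    (5 - Real.sqrt 5) * (D.radius + M) ^ 2 ≤ 8 * M ^ 2 := by
  by_contra hcon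
  have hcon := not_le.1 hcon
  have hne : E ≠ D := by rintro rfl; exact lt_irrefl _ hlt
  obtain ⟨a, -, -, h0⟩ := polar_exists hE hne ht 0
  obtain ⟨F1, θ1, h1, -, b1, c1⟩ := nb_next hP hD hmin hmax hcon h0
  obtain ⟨F2, θ2, h2, a2, b2, -⟩ := nb_next hP hD hmin hmax hcon h1
  obtain ⟨F3, θ3, h3, a3, b3, -⟩ := nb_next hP hD hmin hmax hcon h2
  obtain ⟨F4, θ4, h4, a4, b4, -⟩ := nb_next hP hD hmin hmax hcon h3
  obtain ⟨F5, θ5, h5, a5, b5, -⟩ := nb_next hP hD hmin hmax hcon h4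
  have c1 := c1 hlt
  have := nb_sep hP.1 hmin h5 (nb_period h0) (by linarith)
  linarith

/-- in a compact packing with finitely many radii, at least two of which
are distinct, the ratio of the smallest to the largest radius is at most
`2√2/√(5 − √5) − 1`. -/
theorem compact_packing_uniformity_bound (P : Set Disk) (hP : IsCompactPacking P)
    (hfin : (Disk.radius '' P).Finite) (h2 : 2 ≤ (Disk.radius '' P).ncard) :
    sInf (Disk.radius '' P) / sSup (Disk.radius '' P)
      ≤ 2 * Real.sqrt 2 / Real.sqrt (5 - Real.sqrt 5) - 1 := by
  have hne : (Disk.radius '' P).Nonempty := by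
    rw [Set.nonempty_iff_ne_empty]
    intro h
    rw [h, Set.ncard_empty] at h2
    omega
  obtain ⟨D₀, hD₀, hD₀m⟩ := hne.csInf_mem hfin
  obtain ⟨E₀, hE₀, hE₀M⟩ := hne.csSup_mem hfin
  set m := sInf (Disk.radius '' P) with hm
  set M := sSup (Disk.radius '' P) with hM
  have h1 : ∀ d ∈ P, m ≤ d.radius := fun d hd => csInf_le hfin.bddBelow ⟨d, hd, rfl⟩
  have h3 : ∀ d ∈ P, d.radius ≤ M := fun d hd => le_csSup hfin.bddAbove ⟨d, hd, rfl⟩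
  have hm0 : 0 < m := hD₀m ▸ D₀.radius_pos
  have hM0 : 0 < M := hE₀M ▸ E₀.radius_pos
  have hlt : m < E₀.radius := by
    rw [hE₀M]
    by_contra h
    have h := not_lt.1 h
    have hsub : Disk.radius '' P ⊆ {m} := by
      rintro _ ⟨d, hd, rfl⟩
      exact le_antisymm ((h3 d hd).trans h) (h1 d hd)
    have := Set.ncard_le_ncard hsub (Set.finite_singleton m)
    rw [Set.ncard_singleton] at this
    omega
  obtain ⟨D, hD, E, hE, hDr, hEr, ht⟩ := exists_tangent hP hm0 h1 h3 hD₀ hE₀ hD₀m hlt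
  have key := main_ineq hP hD hE (by rw [hDr]; exact h1) h3 (by rw [hDr]; exact hEr) ht
  rw [hDr] at key
  have h5 : Real.sqrt 5 < 5 := by
    rw [Real.sqrt_lt' (by norm_num)]
    norm_num
  have hk : 0 < Real.sqrt (5 - Real.sqrt 5) := Real.sqrt_pos.2 (by linarith)
  rw [le_sub_iff_add_le, le_div_iff₀ hk, div_add_one hM0.ne', div_mul_eq_mul_div, div_le_iff₀ hM0]
  refine le_of_sq_le_sq ?_ (by positivity)
  rw [mul_pow, mul_pow, mul_pow, Real.sq_sqrt (by linarith), Real.sq_sqrt (by norm_num)]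
  linarith
end

section
/- Let P be a packing of the Euclidean plane by disks whose radii all lie in the interval [r, 1] for some 0 < r ≤ 1. If the density of P is strictly greater than π/√12 (the density of the hexagonal compact packing), then r ≤ √((7·tan(π/7) − 6·tan(π/6)) / (6·tan(π/6) − 5·tan(π/5))). -/
open Metric Set

namespace BlindAux

section Comb

variable {ι : Type*} (a b c : ι → ℝ)

/-- Affine functions on the plane. -/
def F (i : ι) (x : Plane) : ℝ := a i * x 0 + b i * x 1 + c i

/-- Closed cell of the upper envelope. -/
def cell (i : ι) : Set Plane := {x | ∀ j, F a b c j x ≤ F a b c i x}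

/-- Vertices of the subdivision. -/
def verts : Set Plane := {v | ∃ i j l, v ∈ cell a b c i ∧ v ∈ cell a b c j ∧ v ∈ cell a b c l ∧
  (a j - a i) * (b l - b i) - (a l - a i) * (b j - b i) ≠ 0}

lemma F_step (i : ι) (x w : Plane) (t : ℝ) :
    F a b c i (x + t • w) = F a b c i x + t * (a i * w 0 + b i * w 1) := by
  simp [F]; ring

lemma F_line (i : ι) (x y : Plane) (t : ℝ) :
    F a b c i (x + t • (y - x)) = (1 - t) * F a b c i x + t * F a b c i y := by
  simp [F]; ring

lemma plane_ext {x y : Plane} (h0 : x 0 = y 0) (h1 : x 1 = y 1) : x = y := by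
  ext i; fin_cases i <;> assumption

lemma small_step [Finite ι] (p q : ι → ℝ) (h : ∀ j, 0 < p j ∨ (0 ≤ p j ∧ 0 ≤ q j)) :
    ∃ ε : ℝ, 0 < ε ∧ ∀ j, 0 ≤ p j + ε * q j := by
  have : ∀ᶠ ε in nhdsWithin (0 : ℝ) (Set.Ioi 0), ∀ j, 0 ≤ p j + ε * q j := by
    rw [Filter.eventually_all]
    intro j
    rcases h j with hj | ⟨h1, h2⟩
    · have hc : Filter.Tendsto (fun ε : ℝ => p j + ε * q j) (nhdsWithin (0 : ℝ) (Set.Ioi 0))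
          (nhds (p j + 0 * q j)) :=
        (Continuous.tendsto (by fun_prop) 0).mono_left nhdsWithin_le_nhds
      have := hc.eventually (lt_mem_nhds (a := 0) (by simpa using hj))
      filter_upwards [this] with ε hε using hε.le
    · filter_upwards [self_mem_nhdsWithin] with ε hε
      have : (0 : ℝ) < ε := hε
      positivity
  obtain ⟨ε, h1, h2⟩ := (this.and self_mem_nhdsWithin).exists
  exact ⟨ε, h2, h1⟩

lemma verts_finite [Finite ι] : (verts a b c).Finite := by
  classical
  have key : ∀ v : verts a b c, ∃ t : ι × ι × ι, (v : Plane) ∈ cell a b c t.1 ∧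
      (v : Plane) ∈ cell a b c t.2.1 ∧ (v : Plane) ∈ cell a b c t.2.2 ∧
      (a t.2.1 - a t.1) * (b t.2.2 - b t.1) - (a t.2.2 - a t.1) * (b t.2.1 - b t.1) ≠ 0 := by
    rintro ⟨v, i, j, l, h⟩
    exact ⟨(i, j, l), h⟩
  choose f hf using key
  have : Finite (verts a b c) := by
    apply Finite.of_injective f
    intro v w hvw
    obtain ⟨h1, h2, h3, h4⟩ := hf v
    obtain ⟨k1, k2, k3, k4⟩ := hf w
    rw [← hvw] at k1 k2 k3 k4
    generalize f v = t at *
    obtain ⟨i, j, l⟩ := t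
    simp only at *
    have e1 := le_antisymm (h1 j) (h2 i)
    have e2 := le_antisymm (h1 l) (h3 i)
    have e3 := le_antisymm (k1 j) (k2 i)
    have e4 := le_antisymm (k1 l) (k3 i)
    simp only [F] at e1 e2 e3 e4
    apply Subtype.ext
    apply plane_ext
    · apply mul_left_cancel₀ h4
      linear_combination (b l - b i) * (e1 - e3) - (b j - b i) * (e2 - e4)
    · apply mul_left_cancel₀ h4
      linear_combination (a j - a i) * (e2 - e4) - (a l - a i) * (e1 - e3)
  exact Set.toFinite _

/-- the `height` -/
def ht (t : ℝ) (x : Plane) : ℝ := x 1 - t * x 0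

lemma ext_unique [Finite ι] (t : ℝ) (hgen : ∀ i j, i ≠ j → (a i - a j) + t * (b i - b j) ≠ 0)
    (σ : ℝ) (hσ : σ ≠ 0) (i : ι) (v v' : Plane) (hv : v ∈ cell a b c i) (hv' : v' ∈ cell a b c i)
    (hm : ∀ x ∈ cell a b c i, σ * ht t x ≤ σ * ht t v)
    (hm' : ∀ x ∈ cell a b c i, σ * ht t x ≤ σ * ht t v') : v = v' := by
  by_contra hne
  have hE : ht t v = ht t v' := by
    have := le_antisymm (hm v' hv') (hm' v hv)
    exact (mul_left_cancel₀ hσ this).symm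
  set m : Plane := v + (1 / 2 : ℝ) • (v' - v) with hmdef
  have hmF : ∀ j, F a b c j m = (1 / 2) * F a b c j v + (1 / 2) * F a b c j v' := by
    intro j; rw [hmdef, F_line]; ring
  have hstrict : ∀ j, j ≠ i → 0 < F a b c i m - F a b c j m := by
    intro j hj
    rw [hmF, hmF]
    have h1 := hv j
    have h2 := hv' j
    by_contra hcon
    have h3 : F a b c j v = F a b c i v := by linarith
    have h4 : F a b c j v' = F a b c i v' := by linarith
    simp only [F] at h3 h4
    simp only [ht] at hE
    have : ((a i - a j) + t * (b i - b j)) * (v' 0 - v 0) = 0 := by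
      linear_combination h3 - h4 + (b i - b j) * hE
    rcases mul_eq_zero.1 this with h | h
    · exact hgen i j hj.symm h
    · apply hne
      apply plane_ext
      · linarith
      · have : v' 0 = v 0 := by linarith
        rw [this] at hE; linarith
  obtain ⟨ε, hε, hs⟩ := small_step (fun j => F a b c i m - F a b c j m)
    (fun j => σ * (b i - b j)) (by
      intro j
      by_cases hj : j = i
      · right; subst hj; simp
      · left; exact hstrict j hj)
  have hmem : m + ε • !₂[0, σ] ∈ cell a b c i := by
    intro j
    rw [F_step a b c j m, F_step a b c i m]
    have := hs j
    have h0 : (!₂[0, σ] : Plane) 0 = 0 := rfl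
    have h1 : (!₂[0, σ] : Plane) 1 = σ := rfl
    rw [h0, h1]
    linarith
  have h1 := hm _ hmem
  have h2 : ht t (m + ε • !₂[0, σ]) = ht t v + ε * σ := by
    simp only [ht] at hE
    simp [ht, hmdef]
    linarith
  rw [h2] at h1
  have : 0 < ε * (σ * σ) := mul_pos hε (mul_self_pos.2 hσ)
  nlinarith

lemma cell_line {i : ι} {x y : Plane} (hx : x ∈ cell a b c i) (hy : y ∈ cell a b c i)
    {t : ℝ} (h0 : 0 ≤ t) (h1 : t ≤ 1) : x + t • (y - x) ∈ cell a b c i := by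
  intro j
  rw [F_line, F_line]
  have := hx j
  have := hy j
  gcongr

/-- at a vertex, a non-extremal cell contains a horizontal point -/
lemma nonext (t : ℝ) (i : ι) (v : Plane) (hv : v ∈ cell a b c i) (hV : v ∈ verts a b c)
    (h1 : ¬ ∀ x ∈ cell a b c i, 1 * ht t x ≤ 1 * ht t v)
    (h2 : ¬ ∀ x ∈ cell a b c i, (-1) * ht t x ≤ (-1) * ht t v) :
    ∃ s : ℝ, s ≠ 0 ∧ v + s • !₂[1, t] ∈ cell a b c i := by
  push Not at h1 h2
  obtain ⟨p, hp, hpv⟩ := h1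
  obtain ⟨q, hq, hqv⟩ := h2
  set A := ht t p - ht t v with hA
  set B := ht t v - ht t q with hB
  have hA0 : 0 < A := by linarith
  have hB0 : 0 < B := by linarith
  set τ := A / (A + B) with hτ
  have hτ0 : 0 < τ := by positivity
  have hτ1 : τ < 1 := by rw [hτ, div_lt_one (by positivity)]; linarith
  have hτe : τ * (A + B) = A := by rw [hτ]; field_simp
  set z := p + τ • (q - p) with hz
  have hzc : z ∈ cell a b c i := cell_line a b c hp hq hτ0.le hτ1.le
  have hz0 : z 0 = p 0 + τ * (q 0 - p 0) := by simp [hz]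
  have hz1 : z 1 = p 1 + τ * (q 1 - p 1) := by simp [hz]
  have hzh : ht t z = ht t v := by
    have e : ht t z = ht t p - τ * (A + B) := by
      rw [hA, hB]; simp only [ht]; rw [hz0, hz1]; ring
    rw [e, hτe, hA]; ring
  refine ⟨z 0 - v 0, ?_, ?_⟩
  · intro h0
    have hzv : z = v := by
      apply plane_ext
      · linarith
      · simp only [ht] at hzh
        have : z 0 = v 0 := by linarith
        rw [this] at hzh; linarith
    have hperp : ∀ j, v ∈ cell a b c j →
        (a j - a i) * (p 0 - v 0) + (b j - b i) * (p 1 - v 1) = 0 := by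
      intro j hj
      have e0 := le_antisymm (hv j) (hj i)
      have e1 := hp j
      have e2 := hq j
      have e3 : F a b c j z = F a b c i z := by rw [hzv]; exact e0
      rw [hz, F_line, F_line] at e3
      have e4 : F a b c j p = F a b c i p := by nlinarith
      simp only [F] at e4 e0
      linear_combination e4 - e0
    obtain ⟨j, k, l, hj, hk, hl, hd⟩ := hV
    have p1 := hperp j hj
    have p2 := hperp k hk
    have p3 := hperp l hl
    have q0 : p 0 - v 0 = 0 := by
      apply mul_left_cancel₀ hd
      linear_combination (b l - b j) * (p2 - p1) - (b k - b j) * (p3 - p1)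
    have q1 : p 1 - v 1 = 0 := by
      apply mul_left_cancel₀ hd
      linear_combination (a k - a j) * (p3 - p1) - (a l - a j) * (p2 - p1)
    have : A = 0 := by
      rw [hA]; simp only [ht]; linear_combination q1 - t * q0
    linarith
  · have : v + (z 0 - v 0) • !₂[1, t] = z := by
      simp only [ht] at hzh
      apply plane_ext
      · simp
      · simp; linarith
    rw [this]; exact hzc

lemma exists_gen [Finite ι] (hinj : ∀ i j, i ≠ j → a i ≠ a j ∨ b i ≠ b j) :
    ∃ t : ℝ, ∀ i j, i ≠ j → (a i - a j) + t * (b i - b j) ≠ 0 := by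
  have hfin : (Set.range fun p : ι × ι => -(a p.1 - a p.2) / (b p.1 - b p.2)).Finite :=
    Set.finite_range _
  obtain ⟨t, ht⟩ := hfin.infinite_compl.nonempty
  refine ⟨t, fun i j hij h => ?_⟩
  by_cases hb : b i - b j = 0
  · rw [hb] at h
    rcases hinj i j hij with h' | h'
    · apply h'; linarith
    · apply h'; linarith
  · apply ht
    refine ⟨(i, j), ?_⟩
    simp only
    rw [div_eq_iff hb]; linarith

open Classical in
lemma corner_count [Fintype ι] (hinj : ∀ i j, i ≠ j → a i ≠ a j ∨ b i ≠ b j) :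
    ∑ i, ((verts_finite a b c).toFinset.filter (fun v => v ∈ cell a b c i)).card
      ≤ 6 * Fintype.card ι := by
  obtain ⟨t, hgen⟩ := exists_gen a b hinj
  set V := (verts_finite a b c).toFinset with hVdef
  have hV : ∀ v ∈ V, v ∈ verts a b c := fun v hv => by simpa [hVdef] using hv
  let ex : ι → Plane → Prop := fun i v => (∀ x ∈ cell a b c i, 1 * ht t x ≤ 1 * ht t v) ∨
    (∀ x ∈ cell a b c i, (-1) * ht t x ≤ (-1) * ht t v)
  have hsplit : ∀ i, (V.filter (fun v => v ∈ cell a b c i)).card =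
      (V.filter (fun v => v ∈ cell a b c i ∧ ex i v)).card +
      (V.filter (fun v => v ∈ cell a b c i ∧ ¬ ex i v)).card := by
    intro i
    rw [← Finset.card_filter_add_card_filter_not (s := V.filter (fun v => v ∈ cell a b c i)) (ex i),
      Finset.filter_filter, Finset.filter_filter]
  have hext : ∀ i, (V.filter (fun v => v ∈ cell a b c i ∧ ex i v)).card ≤ 2 := by
    intro i
    have := Finset.card_le_card_of_injOn (s := V.filter (fun v => v ∈ cell a b c i ∧ ex i v))
      (t := (Finset.univ : Finset Bool))
      (fun v => decide (∀ x ∈ cell a b c i, 1 * ht t x ≤ 1 * ht t v)) (fun _ _ => Finset.mem_univ _)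
      (by
        intro v hv v' hv' h
        simp only [Finset.coe_filter, Set.mem_ofPred_eq] at hv hv'
        obtain ⟨-, hv, he⟩ := hv
        obtain ⟨-, hv', he'⟩ := hv'
        simp only [decide_eq_decide] at h
        by_cases hm : ∀ x ∈ cell a b c i, 1 * ht t x ≤ 1 * ht t v
        · exact ext_unique a b c t hgen 1 one_ne_zero i v v' hv hv' hm (h.1 hm)
        · exact ext_unique a b c t hgen (-1) (by norm_num) i v v' hv hv'
            (he.resolve_left hm) (he'.resolve_left (fun h' => hm (h.2 h'))))
    simpa using this
  have hnon : ∀ v ∈ V, (Finset.univ.filter (fun i => v ∈ cell a b c i ∧ ¬ ex i v)).card ≤ 2 := by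
    intro v hvV
    have := Finset.card_le_card_of_injOn
      (s := Finset.univ.filter (fun i => v ∈ cell a b c i ∧ ¬ ex i v))
      (t := (Finset.univ : Finset Bool))
      (fun i => decide (∃ s : ℝ, 0 < s ∧ v + s • !₂[1, t] ∈ cell a b c i))
      (fun _ _ => Finset.mem_univ _)
      (by
        intro i hi j hj h
        simp only [Finset.coe_filter, Set.mem_ofPred_eq, Finset.mem_univ, true_and] at hi hj
        obtain ⟨hi, hei⟩ := hi
        obtain ⟨hj, hej⟩ := hj
        simp only [decide_eq_decide] at h
        by_contra hij
        have hk := hgen i j hij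
        obtain ⟨s, hs, s', hs', hss⟩ : ∃ s : ℝ, v + s • !₂[1, t] ∈ cell a b c i ∧
            ∃ s' : ℝ, v + s' • !₂[1, t] ∈ cell a b c j ∧ 0 < s * s' := by
          by_cases hm : ∃ s : ℝ, 0 < s ∧ v + s • !₂[1, t] ∈ cell a b c i
          · obtain ⟨s, h1, h2⟩ := hm
            obtain ⟨s', h1', h2'⟩ := h.1 ⟨s, h1, h2⟩
            exact ⟨s, h2, s', h2', mul_pos h1 h1'⟩
          · have hm' := fun h' => hm (h.2 h')
            simp only [ex, not_or] at hei hej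
            obtain ⟨s, h1, h2⟩ := nonext a b c t i v hi (hV v hvV) hei.1 hei.2
            obtain ⟨s', h1', h2'⟩ := nonext a b c t j v hj (hV v hvV) hej.1 hej.2
            have n1 : s < 0 := lt_of_le_of_ne (by
              by_contra hc; exact hm ⟨s, not_le.1 hc, h2⟩) h1
            have n2 : s' < 0 := lt_of_le_of_ne (by
              by_contra hc; exact hm' ⟨s', not_le.1 hc, h2'⟩) h1'
            exact ⟨s, h2, s', h2', mul_pos_of_neg_of_neg n1 n2⟩
        have e0 := le_antisymm (hi j) (hj i)
        have e1 := hs j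
        have e2 := hs' i
        rw [F_step, F_step, e0] at e1
        rw [F_step, F_step, e0] at e2
        simp at e1 e2
        have e1' : 0 ≤ s * ((a i - a j) + t * (b i - b j)) := by linarith
        have e2' : s' * ((a i - a j) + t * (b i - b j)) ≤ 0 := by linarith
        have hk2 : 0 < ((a i - a j) + t * (b i - b j)) * ((a i - a j) + t * (b i - b j)) :=
          mul_self_pos.2 hk
        have := mul_pos hss hk2
        nlinarith [mul_nonneg e1' (neg_nonneg.2 e2')])
    simpa using this
  have hthree : ∀ v ∈ V, 3 ≤ (Finset.univ.filter (fun i => v ∈ cell a b c i)).card := by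
    intro v hvV
    obtain ⟨i, j, l, hi, hj, hl, hd⟩ := hV v hvV
    have hsub : ({i, j, l} : Finset ι) ⊆ Finset.univ.filter (fun i => v ∈ cell a b c i) := by
      intro x hx
      simp only [Finset.mem_insert, Finset.mem_singleton] at hx
      rcases hx with rfl | rfl | rfl <;> simp [*]
    have hij : i ≠ j := by rintro rfl; apply hd; ring
    have hil : i ≠ l := by rintro rfl; apply hd; ring
    have hjl : j ≠ l := by rintro rfl; apply hd; ring
    calc 3 = ({i, j, l} : Finset ι).card := (Finset.card_eq_three.2 ⟨i, j, l, hij, hil, hjl, rfl⟩).symm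
      _ ≤ _ := Finset.card_le_card hsub
  have hswap : ∀ R : ι → Plane → Prop, ∑ i, (V.filter (fun v => R i v)).card =
      ∑ v ∈ V, (Finset.univ.filter (fun i => R i v)).card := by
    intro R
    simp only [Finset.card_filter]
    exact Finset.sum_comm
  have T1 : 3 * V.card ≤ ∑ i, (V.filter (fun v => v ∈ cell a b c i)).card := by
    rw [hswap (fun i v => v ∈ cell a b c i)]
    calc 3 * V.card = ∑ v ∈ V, 3 := by simp [mul_comm]
      _ ≤ _ := Finset.sum_le_sum hthree
  have T2 : ∑ i, (V.filter (fun v => v ∈ cell a b c i ∧ ¬ ex i v)).card ≤ 2 * V.card := by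
    have hs2 : ∑ i, (V.filter (fun v => v ∈ cell a b c i ∧ ¬ ex i v)).card =
        ∑ v ∈ V, (Finset.univ.filter (fun i => v ∈ cell a b c i ∧ ¬ ex i v)).card := by
      convert hswap (fun i v => v ∈ cell a b c i ∧ ¬ ex i v)
    rw [hs2]
    calc _ ≤ ∑ v ∈ V, 2 := Finset.sum_le_sum hnon
      _ = _ := by simp [mul_comm]
  have T3 : ∑ i, (V.filter (fun v => v ∈ cell a b c i ∧ ex i v)).card ≤ 2 * Fintype.card ι := by
    calc _ ≤ ∑ i : ι, 2 := Finset.sum_le_sum (fun i _ => hext i)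
      _ = _ := by simp [mul_comm]
  have T4 := Finset.sum_congr (rfl : (Finset.univ : Finset ι) = Finset.univ) (fun i _ => hsplit i)
  rw [Finset.sum_add_distrib] at T4
  omega

lemma cell_closed (i : ι) : IsClosed (cell a b c i) := by
  have : cell a b c i = ⋂ j, {x | F a b c j x ≤ F a b c i x} := by
    ext x; simp [cell]
  rw [this]
  refine isClosed_iInter fun j => isClosed_le ?_ ?_ <;> unfold F <;> fun_prop

lemma side_end [Finite ι] (i j : ι) (q : Plane) (hbd : Bornology.IsBounded (cell a b c i))
    (hq : q ∈ cell a b c i) (hj : F a b c j q = F a b c i q) (hne : a i ≠ a j ∨ b i ≠ b j) :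
    ∃ s : ℝ, 0 ≤ s ∧ q + s • !₂[-(b j - b i), a j - a i] ∈ cell a b c i ∧
      q + s • !₂[-(b j - b i), a j - a i] ∈ verts a b c := by
  set w : Plane := !₂[-(b j - b i), a j - a i] with hw
  have w0 : w 0 = -(b j - b i) := rfl
  have w1 : w 1 = a j - a i := rfl
  have hwne : w ≠ 0 := by
    intro h
    have h0 : w 0 = 0 := by rw [h]; rfl
    have h1 : w 1 = 0 := by rw [h]; rfl
    rcases hne with h | h
    · apply h; linarith
    · apply h; linarith
  have hwpos : 0 < ‖w‖ := norm_pos_iff.2 hwne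
  obtain ⟨M, hM⟩ := hbd.exists_norm_le
  set S : Set ℝ := {s | 0 ≤ s ∧ q + s • w ∈ cell a b c i} with hS
  have hcl : IsClosed S :=
    isClosed_Ici.inter ((cell_closed a b c i).preimage (f := fun s : ℝ => q + s • w) (by fun_prop))
  have hsub : S ⊆ Set.Icc 0 ((M + ‖q‖) / ‖w‖) := by
    rintro s ⟨h0, h1⟩
    refine ⟨h0, ?_⟩
    rw [le_div_iff₀ hwpos]
    calc s * ‖w‖ = ‖s • w‖ := by rw [norm_smul, Real.norm_of_nonneg h0]
      _ = ‖(q + s • w) - q‖ := by congr 1; abel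
      _ ≤ ‖q + s • w‖ + ‖q‖ := norm_sub_le _ _
      _ ≤ _ := by gcongr; exact hM _ h1
  have hcomp : IsCompact S := isCompact_Icc.of_isClosed_subset hcl hsub
  have hne : S.Nonempty := ⟨0, le_rfl, by simpa using hq⟩
  obtain ⟨s, ⟨hs0, hsc⟩, hmax⟩ := hcomp.exists_isGreatest hne
  refine ⟨s, hs0, hsc, ?_⟩
  set v := q + s • w with hv
  have hjv : F a b c j v = F a b c i v := by
    rw [hv, F_step, F_step, hj, w0, w1]; ring
  by_contra hnv
  obtain ⟨ε, hε, hst⟩ := small_step (fun l => F a b c i v - F a b c l v)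
    (fun l => (a i * w 0 + b i * w 1) - (a l * w 0 + b l * w 1)) (by
      intro l
      have h1 := hsc l
      rcases h1.lt_or_eq with h | h
      · left; linarith
      · right
        refine ⟨by linarith, ?_⟩
        by_contra hc
        apply hnv
        refine ⟨i, j, l, hsc, ?_, ?_, ?_⟩
        · intro k; rw [hjv]; exact hsc k
        · intro k; rw [h]; exact hsc k
        · rw [w0, w1] at hc
          intro h'
          apply hc
          apply le_of_eq
          linear_combination h')
  have : s + ε ∈ S := by
    refine ⟨by linarith, ?_⟩
    have e : q + (s + ε) • w = v + ε • w := by rw [hv, add_smul]; abel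
    rw [e]
    intro l
    rw [F_step a b c l v, F_step a b c i v]
    have := hst l
    simp only at this
    linarith
  have := hmax this
  linarith

open Classical in
lemma sides [Fintype ι] (i : ι) (c0 : Plane) (hc0 : ∀ j, j ≠ i → F a b c j c0 < F a b c i c0)
    (hbd : Bornology.IsBounded (cell a b c i)) (hinj : ∀ i j, i ≠ j → a i ≠ a j ∨ b i ≠ b j) :
    ∃ E : Finset ι, i ∉ E ∧
      (∀ x, (∀ j ∈ E, F a b c j x < F a b c i x) → ∀ j, j ≠ i → F a b c j x < F a b c i x) ∧
      E.card ≤ ((verts_finite a b c).toFinset.filter (fun v => v ∈ cell a b c i)).card := by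
  obtain ⟨E, hE⟩ := exists_minimal_of_wellFoundedLT (fun E : Finset ι => i ∉ E ∧
      (∀ x, (∀ j ∈ E, F a b c j x < F a b c i x) → ∀ j, j ≠ i → F a b c j x < F a b c i x))
    ⟨Finset.univ.erase i, by simp, fun x hx j hj => hx j (by simp [hj])⟩
  obtain ⟨hiE, hQ⟩ := hE.prop
  refine ⟨E, hiE, hQ, ?_⟩
  have key : ∀ j, j ∈ E → ∃ v, v ∈ verts a b c ∧ v ∈ cell a b c i ∧ F a b c j v = F a b c i v ∧
      ∀ l ∈ E, l ≠ j → F a b c l v = F a b c i v →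
        0 < (a j - a i) * (b l - b i) - (a l - a i) * (b j - b i) := by
    intro j hj
    have hji : j ≠ i := by rintro rfl; exact hiE hj
    have hnot := hE.not_prop_of_lt (Finset.erase_ssubset hj)
    have : ∃ p, (∀ l ∈ E.erase j, F a b c l p < F a b c i p) ∧ F a b c i p ≤ F a b c j p := by
      by_contra hcon
      push Not at hcon
      apply hnot
      refine ⟨fun h => hiE (Finset.mem_of_mem_erase h), fun x hx => hQ x ?_⟩
      intro l hl
      by_cases hlj : l = j
      · rw [hlj]; exact hcon x hx
      · exact hx l (Finset.mem_erase.2 ⟨hlj, hl⟩)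
    obtain ⟨p, hp, hpj⟩ := this
    have hA := hc0 j hji
    set A := F a b c i c0 - F a b c j c0 with hAd
    set B := F a b c j p - F a b c i p with hBd
    have hA0 : 0 < A := by linarith
    have hB0 : 0 ≤ B := by linarith
    set τ := A / (A + B) with hτ
    have hτ0 : 0 < τ := by positivity
    have hτ1 : τ ≤ 1 := by rw [hτ, div_le_one (by positivity)]; linarith
    have hτe : τ * (A + B) = A := by rw [hτ]; field_simp
    obtain ⟨q, hq⟩ : ∃ q, q = c0 + τ • (p - c0) := ⟨_, rfl⟩
    have hqF : ∀ k, F a b c k q = (1 - τ) * F a b c k c0 + τ * F a b c k p := by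
      intro k; rw [hq, F_line]
    have hjq : F a b c j q = F a b c i q := by
      rw [hqF, hqF]
      linear_combination hτe - (1 - τ) * hAd - (τ - 1) * hAd - hAd * τ - τ * hBd + (τ - 1) * hAd
    have hlq : ∀ l ∈ E, l ≠ j → F a b c l q < F a b c i q := by
      intro l hl hlj
      have hli : l ≠ i := by rintro rfl; exact hiE hl
      have h1 := hc0 l hli
      have h2 := hp l (Finset.mem_erase.2 ⟨hlj, hl⟩)
      rw [hqF, hqF]
      have : 0 ≤ (1 - τ) * (F a b c i c0 - F a b c l c0) :=
        mul_nonneg (by linarith) (by linarith)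
      have : 0 < τ * (F a b c i p - F a b c l p) := mul_pos hτ0 (by linarith)
      linarith
    have hqc : q ∈ cell a b c i := by
      intro k
      by_cases hki : k = i
      · rw [hki]
      by_contra hcon
      push Not at hcon
      have hD := hc0 k hki
      set D := F a b c i c0 - F a b c k c0 with hDd
      set δ := F a b c k q - F a b c i q with hδd
      have hD0 : 0 < D := by linarith
      have hδ0 : 0 < δ := by linarith
      set t := D / (D + δ) with ht
      have ht0 : 0 < t := by positivity
      have ht1 : t < 1 := by rw [ht, div_lt_one (by positivity)]; linarith
      have hte : t * (D + δ) = D := by rw [ht]; field_simp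
      have h := hQ (c0 + t • (q - c0)) (by
        intro l hl
        have hli : l ≠ i := by rintro rfl; exact hiE hl
        have h1 := hc0 l hli
        rw [F_line, F_line]
        have h3 : F a b c l q ≤ F a b c i q := by
          by_cases hlj : l = j
          · rw [hlj, hjq]
          · exact (hlq l hl hlj).le
        have : 0 < (1 - t) * (F a b c i c0 - F a b c l c0) :=
          mul_pos (by linarith) (by linarith)
        have : 0 ≤ t * (F a b c i q - F a b c l q) := mul_nonneg ht0.le (by linarith)
        linarith) k hki
      rw [F_line, F_line] at h
      have : (1 - t) * D - t * δ > 0 := by rw [hDd, hδd]; linarith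
      linarith
    obtain ⟨s, hs0, hsc, hsv⟩ := side_end a b c i j q hbd hqc hjq (hinj i j hji.symm)
    refine ⟨_, hsv, hsc, ?_, ?_⟩
    · rw [F_step, F_step, hjq]
      have w0 : (!₂[-(b j - b i), a j - a i] : Plane) 0 = -(b j - b i) := rfl
      have w1 : (!₂[-(b j - b i), a j - a i] : Plane) 1 = a j - a i := rfl
      rw [w0, w1]; ring
    · intro l hl hlj hlv
      have h1 := hlq l hl hlj
      rw [F_step, F_step] at hlv
      have w0 : (!₂[-(b j - b i), a j - a i] : Plane) 0 = -(b j - b i) := rfl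
      have w1 : (!₂[-(b j - b i), a j - a i] : Plane) 1 = a j - a i := rfl
      rw [w0, w1] at hlv
      by_contra hcon
      have : 0 ≤ s * -((a j - a i) * (b l - b i) - (a l - a i) * (b j - b i)) :=
        mul_nonneg hs0 (by linarith)
      linarith
  choose! v hv1 hv2 hv3 hv4 using key
  apply Finset.card_le_card_of_injOn v
  · intro j hj
    simp only [Finset.coe_filter, Set.mem_ofPred_eq, Set.Finite.mem_toFinset]
    exact ⟨hv1 j hj, hv2 j hj⟩
  · intro j hj l hl hjl
    by_contra hne
    have h1 := hv4 j hj l hl (Ne.symm hne) (by rw [hjl]; exact hv3 l hl)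
    have h2 := hv4 l hl j hj hne (by rw [← hjl]; exact hv3 j hj)
    linarith

end Comb

section Area

open MeasureTheory Real

lemma cap_integral (s β : ℝ) (hs : 0 < s) (h0 : 0 < β) (h1 : β < π / 2) :
    ∫ x in (s * cos β)..s, 2 * √(s ^ 2 - x ^ 2) = s ^ 2 * (β - sin β * cos β) := by
  have hc : 0 < cos β := cos_pos_of_mem_Ioo ⟨by linarith, h1⟩
  have hsin : 0 ≤ sin β := sin_nonneg_of_nonneg_of_le_pi h0.le (by linarith)
  have hle : s * cos β ≤ s := by nlinarith [cos_le_one β]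
  have := intervalIntegral.integral_eq_sub_of_hasDerivAt_of_le
    (f := fun x => s ^ 2 * arcsin (x / s) + x * √(s ^ 2 - x ^ 2))
    (f' := fun x => 2 * √(s ^ 2 - x ^ 2)) hle ?_ ?_ ?_
  · rw [this]
    have e1 : √(s ^ 2 - (s * cos β) ^ 2) = s * sin β := by
      rw [show s ^ 2 - (s * cos β) ^ 2 = (s * sin β) ^ 2 by
        linear_combination (-s ^ 2) * sin_sq_add_cos_sq β]
      exact sqrt_sq (by positivity)
    have e2 : arcsin (s * cos β / s) = π / 2 - β := by
      rw [mul_div_cancel_left₀ _ hs.ne', ← sin_pi_div_two_sub, arcsin_sin (by linarith) (by linarith)]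
    simp only [e1, e2, div_self hs.ne', arcsin_one, sub_self, sqrt_zero]
    ring
  · apply Continuous.continuousOn
    fun_prop
  · intro x hx
    have hx0 : 0 < x := lt_trans (by positivity) hx.1
    have hxs : x < s := hx.2
    have hpos : 0 < s ^ 2 - x ^ 2 := by nlinarith
    have d0 : HasDerivAt (fun x : ℝ => x / s) (1 / s) x := (hasDerivAt_id x).div_const s
    have d00 : HasDerivAt arcsin (1 / √(1 - (x / s) ^ 2)) (x / s) :=
      hasDerivAt_arcsin (by
        have : 0 < x / s := by positivity
        linarith) (by rw [Ne, div_eq_one_iff_eq hs.ne']; exact hxs.ne)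
    have d1 : HasDerivAt (fun x => arcsin (x / s)) (1 / √(1 - (x / s) ^ 2) * (1 / s)) x := by
      have := HasDerivAt.comp x (h₂ := arcsin) (h := fun x : ℝ => x / s) d00 d0
      exact this
    have d2 : HasDerivAt (fun x => √(s ^ 2 - x ^ 2)) ((-(2 * x)) / (2 * √(s ^ 2 - x ^ 2))) x := by
      have : HasDerivAt (fun x : ℝ => s ^ 2 - x ^ 2) (-(2 * x)) x := by
        simpa using (hasDerivAt_pow 2 x).const_sub (s ^ 2)
      exact this.sqrt hpos.ne'
    have d3 := (d1.const_mul (s ^ 2)).add ((hasDerivAt_id x).mul d2)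
    refine d3.congr_deriv ?_
    have e : √(1 - (x / s) ^ 2) = √(s ^ 2 - x ^ 2) / s := by
      rw [show 1 - (x / s) ^ 2 = (s ^ 2 - x ^ 2) / s ^ 2 by field_simp, sqrt_div hpos.le,
        sqrt_sq hs.le]
    rw [e]
    have hq : 0 < √(s ^ 2 - x ^ 2) := sqrt_pos.2 hpos
    have hqq := sq_sqrt hpos.le
    simp only [id]
    field_simp
    rw [hqq]; ring
  · apply Continuous.intervalIntegrable
    fun_prop

lemma cap_prod (s β : ℝ) (hs : 0 < s) (h0 : 0 < β) (h1 : β < π / 2) :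
    volume {p : ℝ × ℝ | s * cos β ≤ p.1 ∧ p.1 ^ 2 + p.2 ^ 2 ≤ s ^ 2} ≤
      ENNReal.ofReal (s ^ 2 * (β - sin β * cos β)) := by
  have hc : 0 < cos β := cos_pos_of_mem_Ioo ⟨by linarith, h1⟩
  have hle : s * cos β ≤ s := by nlinarith [cos_le_one β]
  have hm : MeasurableSet {p : ℝ × ℝ | s * cos β ≤ p.1 ∧ p.1 ^ 2 + p.2 ^ 2 ≤ s ^ 2} := by
    apply IsClosed.measurableSet
    have c1 : IsClosed {p : ℝ × ℝ | s * cos β ≤ p.1} := isClosed_le (by fun_prop) (by fun_prop)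
    have c2 : IsClosed {p : ℝ × ℝ | p.1 ^ 2 + p.2 ^ 2 ≤ s ^ 2} :=
      isClosed_le (by fun_prop) (by fun_prop)
    exact c1.inter c2
  rw [Measure.volume_eq_prod, Measure.prod_apply hm]
  calc _ ≤ ∫⁻ x, (Set.Icc (s * cos β) s).indicator
        (fun x => ENNReal.ofReal (2 * √(s ^ 2 - x ^ 2))) x := by
        apply lintegral_mono
        intro x
        simp only
        by_cases hx : x ∈ Set.Icc (s * cos β) s
        · rw [Set.indicator_of_mem hx]
          calc _ ≤ volume (Set.Icc (-√(s ^ 2 - x ^ 2)) (√(s ^ 2 - x ^ 2))) := by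
                apply measure_mono
                rintro y ⟨-, hy⟩
                simp only at hy
                exact abs_le.1 (abs_le_sqrt (by linarith))
            _ = _ := by rw [volume_Icc]; congr 1; ring
        · rw [Set.indicator_of_notMem hx]
          rw [nonpos_iff_eq_zero]
          convert measure_empty
          · ext y
            simp only [Set.mem_preimage, Set.mem_ofPred_eq, Set.mem_empty_iff_false, iff_false]
            rintro ⟨h2, h3⟩
            apply hx
            refine ⟨h2, ?_⟩
            apply le_of_sq_le_sq _ hs.le
            nlinarith
          · infer_instance
    _ = ∫⁻ x in Set.Icc (s * cos β) s, ENNReal.ofReal (2 * √(s ^ 2 - x ^ 2)) :=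
        lintegral_indicator measurableSet_Icc _
    _ = ENNReal.ofReal (∫ x in Set.Icc (s * cos β) s, 2 * √(s ^ 2 - x ^ 2)) := by
        rw [ofReal_integral_eq_lintegral_ofReal]
        · apply Continuous.integrableOn_Icc
          fun_prop
        · exact Filter.Eventually.of_forall fun x => by positivity
    _ = _ := by
        rw [integral_Icc_eq_integral_Ioc, ← intervalIntegral.integral_of_le hle,
          cap_integral s β hs h0 h1]

lemma mp_prod : MeasurePreserving (fun x : Plane => ((x 0, x 1) : ℝ × ℝ)) volume volume :=
  (volume_preserving_finTwoArrow ℝ).comp (PiLp.volume_preserving_ofLp (Fin 2))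

/-- rotation -/
def rot (u0 u1 : ℝ) (h : u0 ^ 2 + u1 ^ 2 = 1) : Plane →ₗᵢ[ℝ] Plane where
  toFun x := !₂[u0 * x 0 + u1 * x 1, -u1 * x 0 + u0 * x 1]
  map_add' x y := by apply plane_ext <;> simp <;> ring
  map_smul' m x := by apply plane_ext <;> simp <;> ring
  norm_map' x := by
    simp only [EuclideanSpace.norm_eq, LinearMap.coe_mk, AddHom.coe_mk, Fin.sum_univ_two]
    congr 1
    simp only [Real.norm_eq_abs, sq_abs]
    simp
    linear_combination (x 0 ^ 2 + x 1 ^ 2) * h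

lemma rot_mp (u0 u1 : ℝ) (h : u0 ^ 2 + u1 ^ 2 = 1) :
    MeasurePreserving (rot u0 u1 h) volume volume := by
  have := ((rot u0 u1 h).toLinearIsometryEquiv rfl).measurePreserving
  simpa using this

lemma cap_meas (g0 g1 : ℝ) (hg : g0 ≠ 0 ∨ g1 ≠ 0) (cc : Plane) (s β : ℝ) (hs : 0 < s) (h0 : 0 < β)
    (h1 : β < π / 2) :
    volume {x : Plane | x ∈ closedBall cc s ∧
      s * cos β * √(g0 ^ 2 + g1 ^ 2) ≤ g0 * (x 0 - cc 0) + g1 * (x 1 - cc 1)} ≤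
      ENNReal.ofReal (s ^ 2 * (β - sin β * cos β)) := by
  have hpos : 0 < g0 ^ 2 + g1 ^ 2 := by
    rcases hg with h | h <;> positivity
  set n := √(g0 ^ 2 + g1 ^ 2) with hn
  have hn0 : 0 < n := sqrt_pos.2 hpos
  have hn2 : n ^ 2 = g0 ^ 2 + g1 ^ 2 := sq_sqrt hpos.le
  have hu : (g0 / n) ^ 2 + (g1 / n) ^ 2 = 1 := by
    field_simp; rw [hn2]
  have hmp : MeasurePreserving (fun x : Plane => (((rot _ _ hu (x - cc)) 0, (rot _ _ hu (x - cc)) 1) : ℝ × ℝ))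
      volume volume :=
    mp_prod.comp ((rot_mp _ _ hu).comp (measurePreserving_sub_right volume cc))
  refine le_trans ?_ (cap_prod s β hs h0 h1)
  have hm : MeasurableSet {p : ℝ × ℝ | s * cos β ≤ p.1 ∧ p.1 ^ 2 + p.2 ^ 2 ≤ s ^ 2} := by
    apply IsClosed.measurableSet
    have c1 : IsClosed {p : ℝ × ℝ | s * cos β ≤ p.1} := isClosed_le (by fun_prop) (by fun_prop)
    have c2 : IsClosed {p : ℝ × ℝ | p.1 ^ 2 + p.2 ^ 2 ≤ s ^ 2} :=
      isClosed_le (by fun_prop) (by fun_prop)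
    exact c1.inter c2
  rw [← hmp.measure_preimage hm.nullMeasurableSet]
  apply measure_mono
  rintro x ⟨hx1, hx2⟩
  have e0 : (rot _ _ hu (x - cc)) 0 = g0 / n * (x 0 - cc 0) + g1 / n * (x 1 - cc 1) := rfl
  have e1 : (rot _ _ hu (x - cc)) 1 = -(g1 / n) * (x 0 - cc 0) + g0 / n * (x 1 - cc 1) := rfl
  simp only [Set.mem_preimage, Set.mem_ofPred_eq]
  rw [e0, e1]
  constructor
  · rw [show g0 / n * (x 0 - cc 0) + g1 / n * (x 1 - cc 1) =
      (g0 * (x 0 - cc 0) + g1 * (x 1 - cc 1)) / n by ring, le_div_iff₀ hn0]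
    exact hx2
  · rw [mem_closedBall, EuclideanSpace.dist_eq, Fin.sum_univ_two, sqrt_le_left hs.le] at hx1
    simp only [Real.dist_eq, sq_abs] at hx1
    calc _ = ((g0 / n) ^ 2 + (g1 / n) ^ 2) * ((x 0 - cc 0) ^ 2 + (x 1 - cc 1) ^ 2) := by ring
      _ ≤ _ := by rw [hu, one_mul]; exact hx1

lemma area_lower {κ : Type*} (E : Finset κ) (g0 g1 : κ → ℝ) (hg : ∀ j ∈ E, g0 j ≠ 0 ∨ g1 j ≠ 0)
    (cc : Plane) (ρ β : ℝ) (hρ : 0 < ρ) (h0 : 0 < β) (h1 : β < π / 2) (K : Set Plane)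
    (hK : volume K ≠ ⊤)
    (hcov : ∀ x, (∀ j ∈ E, g0 j * (x 0 - cc 0) + g1 j * (x 1 - cc 1) < ρ * √(g0 j ^ 2 + g1 j ^ 2))
      → x ∈ K) :
    ρ ^ 2 * (π / cos β ^ 2 - E.card * (β / cos β ^ 2 - tan β)) ≤ (volume K).toReal := by
  have hc : 0 < cos β := cos_pos_of_mem_Ioo ⟨by linarith, h1⟩
  set s := ρ / cos β with hs
  have hs0 : 0 < s := by positivity
  have hsc : s * cos β = ρ := by rw [hs]; field_simp
  have hcap : 0 ≤ s ^ 2 * (β - sin β * cos β) := by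
    have := sin_le h0.le
    have h3 : sin β * cos β ≤ sin β * 1 :=
      mul_le_mul_of_nonneg_left (cos_le_one β) (sin_nonneg_of_nonneg_of_le_pi h0.le (by linarith))
    have : 0 ≤ β - sin β * cos β := by linarith
    positivity
  let H : κ → Set Plane := fun j => {x : Plane | x ∈ closedBall cc s ∧
      s * cos β * √(g0 j ^ 2 + g1 j ^ 2) ≤ g0 j * (x 0 - cc 0) + g1 j * (x 1 - cc 1)}
  have hsub : closedBall cc s ⊆ K ∪ ⋃ j ∈ E, H j := by
    intro x hx
    by_cases h : x ∈ K
    · exact Or.inl h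
    · right
      by_contra hcon
      apply h
      apply hcov
      intro j hj
      by_contra hlt
      apply hcon
      simp only [Set.mem_iUnion]
      refine ⟨j, hj, hx, ?_⟩
      rw [hsc]; exact not_lt.1 hlt
  have hle : volume (closedBall cc s) ≤
      volume K + E.card * ENNReal.ofReal (s ^ 2 * (β - sin β * cos β)) := by
    calc _ ≤ volume (K ∪ ⋃ j ∈ E, H j) := measure_mono hsub
      _ ≤ volume K + volume (⋃ j ∈ E, H j) := measure_union_le _ _
      _ ≤ volume K + ∑ j ∈ E, volume (H j) := by gcongr; exact measure_biUnion_finset_le _ _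
      _ ≤ volume K + ∑ j ∈ E, ENNReal.ofReal (s ^ 2 * (β - sin β * cos β)) := by
          gcongr with j hj
          exact cap_meas _ _ (hg j hj) cc s β hs0 h0 h1
      _ = _ := by simp
  have hle2 := ENNReal.toReal_mono (by finiteness) hle
  rw [EuclideanSpace.volume_closedBall_fin_two, ENNReal.toReal_add hK (by finiteness),
    ENNReal.toReal_mul, ENNReal.toReal_mul, ENNReal.toReal_pow, ENNReal.toReal_ofReal hs0.le,
    ENNReal.toReal_ofReal pi_pos.le, ENNReal.toReal_ofReal hcap, ENNReal.toReal_natCast] at hle2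
  have e : ρ ^ 2 * (π / cos β ^ 2 - E.card * (β / cos β ^ 2 - tan β)) =
      s ^ 2 * π - E.card * (s ^ 2 * (β - sin β * cos β)) := by
    rw [hs, tan_eq_sin_div_cos]
    field_simp
  rw [e]; linarith

lemma volume_square (R : ℝ) (hR : 0 ≤ R) : volume (square R) = ENNReal.ofReal ((2 * R) ^ 2) := by
  have : square R = (fun x : Plane => ((x 0, x 1) : ℝ × ℝ)) ⁻¹' (Set.Icc (-R) R ×ˢ Set.Icc (-R) R) := by
    ext x; simp [square, abs_le]; tauto
  rw [this, mp_prod.measure_preimage (measurableSet_Icc.prod measurableSet_Icc).nullMeasurableSet,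
    Measure.volume_eq_prod, Measure.prod_prod, volume_Icc, ← ENNReal.ofReal_mul (by linarith)]
  congr 1; ring

/-- convexity of tan -/
lemma tan_tangent {x y : ℝ} (hx0 : 0 < x) (hx : x < π / 2) (hy0 : 0 < y) (hy : y < π / 2)
    (hxy : x ≠ y) :
    tan x + (y - x) / cos x ^ 2 < tan y := by
  have hcx : 0 < cos x := cos_pos_of_mem_Ioo ⟨by linarith, hx⟩
  have hcy : 0 < cos y := cos_pos_of_mem_Ioo ⟨by linarith, hy⟩
  have hsx : 0 < sin x := sin_pos_of_pos_of_lt_pi hx0 (by linarith)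
  have hsy : 0 < sin y := sin_pos_of_pos_of_lt_pi hy0 (by linarith)
  have key : (y - x) * cos y < sin (y - x) * cos x := by
    rcases lt_or_gt_of_ne hxy with h | h
    · obtain ⟨k, rfl⟩ : ∃ k, y = x + k := ⟨y - x, by ring⟩
      have hk : 0 < k := by linarith
      have hk2 : k < π / 2 := by linarith
      have hck : 0 < cos k := cos_pos_of_mem_Ioo ⟨by linarith, hk2⟩
      have hsk : 0 < sin k := sin_pos_of_pos_of_lt_pi hk (by linarith)
      have h1 := lt_tan hk hk2
      rw [tan_eq_sin_div_cos, lt_div_iff₀ hck] at h1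
      rw [add_sub_cancel_left, cos_add]
      nlinarith [mul_pos hcx (sub_pos.2 h1), mul_pos (mul_pos hk hsx) hsk]
    · obtain ⟨k, rfl⟩ : ∃ k, x = y + k := ⟨x - y, by ring⟩
      have hk : 0 < k := by linarith
      have hsk : 0 < sin k := sin_pos_of_pos_of_lt_pi hk (by linarith)
      have h1 := sin_lt hk
      have h2 : sin k * cos k ≤ sin k * 1 := mul_le_mul_of_nonneg_left (cos_le_one k) hsk.le
      rw [show y - (y + k) = -k by ring, sin_neg, cos_add]
      nlinarith [mul_pos hcy (show 0 < k - sin k * cos k by linarith), mul_pos (mul_pos hsk hsk) hsy]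
  have e : tan y - tan x - (y - x) / cos x ^ 2 =
      (sin (y - x) * cos x - (y - x) * cos y) / (cos x ^ 2 * cos y) := by
    rw [tan_eq_sin_div_cos, tan_eq_sin_div_cos, sin_sub]
    field_simp
  have : 0 < (sin (y - x) * cos x - (y - x) * cos y) / (cos x ^ 2 * cos y) :=
    div_pos (by linarith) (by positivity)
  linarith

end Area

section Main

open MeasureTheory Real

lemma sigma_nonneg {β : ℝ} (h0 : 0 < β) (h1 : β < π / 2) : 0 ≤ β / cos β ^ 2 - tan β := by
  have hc : 0 < cos β := cos_pos_of_mem_Ioo ⟨by linarith, h1⟩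
  have := sin_le h0.le
  have h3 : sin β * cos β ≤ sin β * 1 :=
    mul_le_mul_of_nonneg_left (cos_le_one β) (sin_nonneg_of_nonneg_of_le_pi h0.le (by linarith))
  have e : β / cos β ^ 2 - tan β = (β - sin β * cos β) / cos β ^ 2 := by
    rw [tan_eq_sin_div_cos]; field_simp
  rw [e]
  exact div_nonneg (by linarith) (by positivity)

lemma lam_nonneg : 0 ≤ 6 * tan (π / 6) - 7 * tan (π / 7) := by
  have hp := pi_pos
  have h1 := tan_tangent (x := π / 7) (y := π / 6) (by positivity) (by linarith) (by positivity)
    (by linarith) (by intro h; linarith)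
  have h2 := sigma_nonneg (β := π / 7) (by positivity) (by linarith)
  have e : (π / 6 - π / 7) / cos (π / 7) ^ 2 = (π / 7 / cos (π / 7) ^ 2) / 6 := by ring
  rw [e] at h1
  linarith

lemma mu_pos : 0 < 5 * tan (π / 5) - 6 * tan (π / 6) := by
  have hp := pi_pos
  have h1 := tan_tangent (x := π / 6) (y := π / 5) (by positivity) (by linarith) (by positivity)
    (by linarith) (by intro h; linarith)
  have h2 := sigma_nonneg (β := π / 6) (by positivity) (by linarith)
  have e : (π / 5 - π / 6) / cos (π / 6) ^ 2 = (π / 6 / cos (π / 6) ^ 2) / 5 := by ring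
  rw [e] at h1
  linarith

lemma cell_trig (n : ℕ) (ρ r : ℝ) (hr : 0 < r) (hρ : r ≤ ρ) (hρ1 : ρ ≤ 1)
    (hμ : 6 * tan (π / 6) - 7 * tan (π / 7) ≤ (5 * tan (π / 5) - 6 * tan (π / 6)) * r ^ 2) :
    ∃ β, 0 < β ∧ β < π / 2 ∧ 6 * tan (π / 6) * ρ ^ 2 +
      (6 * tan (π / 6) - 7 * tan (π / 7)) * (6 - n) ≤
      ρ ^ 2 * (π / cos β ^ 2 - n * (β / cos β ^ 2 - tan β)) := by
  have hp := pi_pos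
  have hlam := lam_nonneg
  have hmu := mu_pos
  have hρ2 : ρ ^ 2 ≤ 1 := by nlinarith
  have hρr : r ^ 2 ≤ ρ ^ 2 := by nlinarith
  set lam := 6 * tan (π / 6) - 7 * tan (π / 7) with hlamd
  set mu := 5 * tan (π / 5) - 6 * tan (π / 6) with hmud
  have hmr : lam ≤ mu * ρ ^ 2 := hμ.trans (by gcongr)
  rcases lt_trichotomy n 6 with h | h | h
  · refine ⟨π / 5, by positivity, by linarith, ?_⟩
    have h1 := tan_tangent (x := π / 5) (y := π / 6) (by positivity) (by linarith) (by positivity)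
      (by linarith) (by intro h; linarith)
    have e : (π / 6 - π / 5) / cos (π / 5) ^ 2 = - (π / 5 / cos (π / 5) ^ 2) / 6 := by ring
    have e2 : π / cos (π / 5) ^ 2 = 5 * (π / 5 / cos (π / 5) ^ 2) := by ring
    rw [e] at h1
    rw [e2]
    set Q := π / 5 / cos (π / 5) ^ 2
    have hn : (n : ℝ) ≤ 5 := by exact_mod_cast Nat.lt_succ_iff.1 h
    have hs : mu ≤ Q - tan (π / 5) := by linarith
    calc 6 * tan (π / 6) * ρ ^ 2 + lam * (6 - n)
        ≤ 6 * tan (π / 6) * ρ ^ 2 + (mu * ρ ^ 2) * (6 - n) := by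
          have : (0 : ℝ) ≤ 6 - n := by linarith
          gcongr
      _ = ρ ^ 2 * (5 * tan (π / 5) + mu * (5 - n)) := by rw [hmud]; ring
      _ ≤ ρ ^ 2 * (5 * tan (π / 5) + (Q - tan (π / 5)) * (5 - n)) := by
          have : (0 : ℝ) ≤ 5 - n := by linarith
          gcongr
      _ = _ := by ring
  · refine ⟨π / 6, by positivity, by linarith, ?_⟩
    have e2 : π / cos (π / 6) ^ 2 = 6 * (π / 6 / cos (π / 6) ^ 2) := by ring
    rw [e2, h]
    push_cast
    apply le_of_eq; ring
  · refine ⟨π / 7, by positivity, by linarith, ?_⟩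
    have h1 := tan_tangent (x := π / 7) (y := π / 6) (by positivity) (by linarith) (by positivity)
      (by linarith) (by intro h; linarith)
    have e : (π / 6 - π / 7) / cos (π / 7) ^ 2 = (π / 7 / cos (π / 7) ^ 2) / 6 := by ring
    have e2 : π / cos (π / 7) ^ 2 = 7 * (π / 7 / cos (π / 7) ^ 2) := by ring
    rw [e] at h1
    rw [e2]
    set Q := π / 7 / cos (π / 7) ^ 2
    have hn : (7 : ℝ) ≤ n := by exact_mod_cast h
    have hs : Q - tan (π / 7) ≤ lam := by linarith
    calc 6 * tan (π / 6) * ρ ^ 2 + lam * (6 - n)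
        = 6 * tan (π / 6) * ρ ^ 2 - (1 * lam) * (n - 6) := by ring
      _ ≤ 6 * tan (π / 6) * ρ ^ 2 - (ρ ^ 2 * lam) * (n - 6) := by
          have : (0 : ℝ) ≤ n - 6 := by linarith
          gcongr
      _ = ρ ^ 2 * (7 * tan (π / 7) - lam * (n - 7)) := by rw [hlamd]; ring
      _ ≤ ρ ^ 2 * (7 * tan (π / 7) - (Q - tan (π / 7)) * (n - 7)) := by
          have : (0 : ℝ) ≤ n - 7 := by linarith
          gcongr
      _ = _ := by ring

/-- open cells -/
def ocell {ι : Type*} (a b c : ι → ℝ) (i : ι) : Set Plane :=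
  {x | ∀ j, j ≠ i → F a b c j x < F a b c i x}

open Classical in
lemma cell_area {ι : Type*} [Fintype ι] (a b c : ι → ℝ)
    (hinj : ∀ i j, i ≠ j → a i ≠ a j ∨ b i ≠ b j) (i : ι) (cc : Plane) (ρ : ℝ) (hρ : 0 < ρ)
    (hball : closedBall cc ρ ⊆ cell a b c i) (hcc : cc ∈ ocell a b c i)
    (hbd : Bornology.IsBounded (cell a b c i)) :
    ∃ n : ℕ, n ≤ ((verts_finite a b c).toFinset.filter (fun v => v ∈ cell a b c i)).card ∧
      ∀ β, 0 < β → β < π / 2 →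
      ρ ^ 2 * (π / cos β ^ 2 - n * (β / cos β ^ 2 - tan β)) ≤ (volume (ocell a b c i)).toReal := by
  obtain ⟨E, hiE, hE, hcard⟩ := sides a b c i cc hcc hbd hinj
  refine ⟨E.card, hcard, fun β h0 h1 => ?_⟩
  have hsub : ocell a b c i ⊆ cell a b c i := by
    intro x hx j
    by_cases h : j = i
    · rw [h]
    · exact (hx j h).le
  have hgne : ∀ j ∈ E, a j - a i ≠ 0 ∨ b j - b i ≠ 0 := by
    intro j hj
    have hji : j ≠ i := by rintro rfl; exact hiE hj
    rcases hinj j i hji with h | h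
    · exact Or.inl (sub_ne_zero.2 h)
    · exact Or.inr (sub_ne_zero.2 h)
  apply area_lower E (fun j => a j - a i) (fun j => b j - b i) hgne cc ρ β hρ h0 h1
  · exact ((measure_mono hsub).trans_lt hbd.measure_lt_top).ne
  · intro x hx
    apply hE
    intro j hj
    have h := hx j hj
    simp only at h
    have hpos : 0 < (a j - a i) ^ 2 + (b j - b i) ^ 2 := by
      rcases hgne j hj with h | h <;> positivity
    set n := √((a j - a i) ^ 2 + (b j - b i) ^ 2) with hn
    have hn0 : 0 < n := sqrt_pos.2 hpos
    have hn2 : n ^ 2 = (a j - a i) ^ 2 + (b j - b i) ^ 2 := sq_sqrt hpos.le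
    have hy : cc + (ρ / n) • !₂[a j - a i, b j - b i] ∈ closedBall cc ρ := by
      rw [mem_closedBall, dist_eq_norm, add_sub_cancel_left, norm_smul, EuclideanSpace.norm_eq,
        Fin.sum_univ_two]
      simp only [Real.norm_eq_abs, sq_abs]
      have : √((!₂[a j - a i, b j - b i] : Plane) 0 ^ 2 + (!₂[a j - a i, b j - b i] : Plane) 1 ^ 2) = n := rfl
      rw [this, abs_of_pos (by positivity)]
      apply le_of_eq; field_simp
    have h2 := hball hy j
    rw [F_step, F_step] at h2
    have w0 : (!₂[a j - a i, b j - b i] : Plane) 0 = a j - a i := rfl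
    have w1 : (!₂[a j - a i, b j - b i] : Plane) 1 = b j - b i := rfl
    rw [w0, w1] at h2
    have h3 : ρ / n * ((a j - a i) ^ 2 + (b j - b i) ^ 2) = ρ * n := by
      rw [← hn2]; field_simp
    simp only [F] at h2 ⊢
    nlinarith

lemma ocell_disj {ι : Type*} (a b c : ι → ℝ) {i j : ι} (h : i ≠ j) :
    Disjoint (ocell a b c i) (ocell a b c j) := by
  rw [Set.disjoint_left]
  intro x hx hy
  exact lt_asymm (hx j h.symm) (hy i h)

lemma ocell_meas {ι : Type*} [Finite ι] (a b c : ι → ℝ) (i : ι) :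
    MeasurableSet (ocell a b c i) := by
  have : ocell a b c i = ⋂ j, {x | j ≠ i → F a b c j x < F a b c i x} := by
    ext x; simp [ocell]
  rw [this]
  refine MeasurableSet.iInter fun j => ?_
  by_cases h : j = i
  · simp [h]
  · simp only [ne_eq, h, not_false_eq_true, forall_const]
    apply IsOpen.measurableSet
    refine isOpen_lt ?_ ?_ <;> unfold F <;> fun_prop

lemma dist_sq (x y : Plane) : dist x y ^ 2 = (x 0 - y 0) ^ 2 + (x 1 - y 1) ^ 2 := by
  rw [EuclideanSpace.dist_eq, Fin.sum_univ_two, sq_sqrt (by positivity)]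
  simp only [Real.dist_eq, sq_abs]

/-- directions of the four auxiliary functions -/
def e0 : Fin 4 → ℝ := ![1, -1, 0, 0]
/-- directions of the four auxiliary functions -/
def e1 : Fin 4 → ℝ := ![0, 0, 1, -1]

lemma box_real (R c0 c1 x0 x1 Q : ℝ) (hR : 0 ≤ R) (h0 : |c0| ≤ R) (h1 : |c1| ≤ R)
    (hQ : Q ≤ 2 * c0 * x0 + 2 * c1 * x1 + 1)
    (H : ∀ k, (4 * R * (R + 1) + 2) * (e0 k * x0 + e1 k * x1 - R) ≤ Q) :
    |x0| ≤ R + 1 ∧ |x1| ≤ R + 1 := by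
  have H0 := H 0
  have H1 := H 1
  have H2 := H 2
  have H3 := H 3
  simp [e0, e1] at H0 H1 H2 H3
  set M := 4 * R * (R + 1) + 2 with hM
  have A0 : M * (|x0| - R) ≤ Q := by
    rcases abs_cases x0 with ⟨h, _⟩ | ⟨h, _⟩ <;> rw [h] <;> linarith
  have A1 : M * (|x1| - R) ≤ Q := by
    rcases abs_cases x1 with ⟨h, _⟩ | ⟨h, _⟩ <;> rw [h] <;> linarith
  have B0 : c0 * x0 ≤ R * |x0| := by
    calc c0 * x0 ≤ |c0 * x0| := le_abs_self _
      _ = |c0| * |x0| := abs_mul _ _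
      _ ≤ _ := by gcongr
  have B1 : c1 * x1 ≤ R * |x1| := by
    calc c1 * x1 ≤ |c1 * x1| := le_abs_self _
      _ = |c1| * |x1| := abs_mul _ _
      _ ≤ _ := by gcongr
  have C : ∀ t, |x0| ≤ t → |x1| ≤ t → M * (t - R) ≤ Q → t ≤ R + 1 := by
    intro t t0 t1 t2
    by_contra hcon
    push Not at hcon
    have : M * (t - R) ≤ 4 * R * t + 1 := by nlinarith
    rw [hM] at this
    nlinarith [mul_nonneg (mul_nonneg hR hR) (show 0 ≤ t - R - 1 by linarith)]
  rcases le_total |x0| |x1| with h | h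
  · have := C |x1| h le_rfl A1
    exact ⟨by linarith, this⟩
  · have := C |x0| le_rfl h A0
    exact ⟨this, by linarith⟩

open Classical in
theorem finite_bound (S : Finset Disk) (r : ℝ) (hr : 0 < r)
    (hμ : 6 * tan (π / 6) - 7 * tan (π / 7) ≤ (5 * tan (π / 5) - 6 * tan (π / 6)) * r ^ 2)
    (hpack : ∀ d ∈ S, ∀ d' ∈ S, d ≠ d' → Disjoint (interior d.set) (interior d'.set))
    (hrad : ∀ d ∈ S, d.radius ∈ Set.Icc r 1) (R : ℝ) (hR : 0 ≤ R)
    (hin : ∀ d ∈ S, d.set ⊆ square R) :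
    6 * tan (π / 6) * ∑ d ∈ S, d.radius ^ 2 ≤
      (2 * (R + 1)) ^ 2 + 24 * (6 * tan (π / 6) - 7 * tan (π / 7)) := by
  have hsep : ∀ d ∈ S, ∀ d' ∈ S, d ≠ d' → d.radius + d'.radius ≤ dist d.center d'.center := by
    intro d hd d' hd' hne
    have := hpack d hd d' hd' hne
    rw [Disk.set, Disk.set, interior_closedBall _ d.radius_pos.ne',
      interior_closedBall _ d'.radius_pos.ne'] at this
    exact (disjoint_ball_ball_iff d.radius_pos d'.radius_pos).1 this
  set M := 4 * R * (R + 1) + 2 with hM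
  have hM0 : 0 < M := by positivity
  let a : S ⊕ Fin 4 → ℝ := Sum.elim (fun d => 2 * d.1.center 0) (fun k => M * e0 k)
  let b : S ⊕ Fin 4 → ℝ := Sum.elim (fun d => 2 * d.1.center 1) (fun k => M * e1 k)
  let c : S ⊕ Fin 4 → ℝ := Sum.elim
    (fun d => d.1.radius ^ 2 - d.1.center 0 ^ 2 - d.1.center 1 ^ 2) (fun _ => -(M * R))
  have f1 : ∀ (d : S) x, F a b c (Sum.inl d) x =
      x 0 ^ 2 + x 1 ^ 2 - (dist x d.1.center ^ 2 - d.1.radius ^ 2) := by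
    intro d x
    rw [dist_sq]
    simp only [F, a, b, c, Sum.elim_inl]
    ring
  have f2 : ∀ k x, F a b c (Sum.inr k) x = M * (e0 k * x 0 + e1 k * x 1 - R) := by
    intro k x
    simp only [F, a, b, c, Sum.elim_inr]
    ring
  have hcen : ∀ d : S, |d.1.center 0| ≤ R ∧ |d.1.center 1| ≤ R := by
    intro d
    exact hin d.1 d.2 (mem_closedBall_self d.1.radius_pos.le)
  have hinj : ∀ i j, i ≠ j → a i ≠ a j ∨ b i ≠ b j := by
    have mixed : ∀ (d : S) (k : Fin 4), a (Sum.inl d) ≠ a (Sum.inr k) ∨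
        b (Sum.inl d) ≠ b (Sum.inr k) := by
      intro d k
      by_contra hcon
      push Not at hcon
      obtain ⟨q1, q2⟩ := hcon
      obtain ⟨p1, p2⟩ := hcen d
      rw [abs_le] at p1 p2
      have hMR : 2 * R < M := by nlinarith
      simp only [a, b, Sum.elim_inl, Sum.elim_inr] at q1 q2
      fin_cases k <;> simp [e0, e1] at q1 q2 <;> linarith
    rintro (d | k) (d' | k') hne
    · by_contra hcon
      push Not at hcon
      obtain ⟨q1, q2⟩ := hcon
      simp only [a, b, Sum.elim_inl] at q1 q2
      have h1 : d.1 ≠ d'.1 := fun h => hne (by rw [Subtype.ext h])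
      have h2 := hsep d.1 d.2 d'.1 d'.2 h1
      have h3 : d.1.center = d'.1.center := plane_ext (by linarith) (by linarith)
      rw [h3, dist_self] at h2
      linarith [d.1.radius_pos, d'.1.radius_pos]
    · exact mixed d k'
    · rcases mixed d' k with h | h
      · exact Or.inl h.symm
      · exact Or.inr h.symm
    · have hk : k ≠ k' := fun h => hne (by rw [h])
      simp only [a, b, Sum.elim_inr]
      have hM' := hM0.ne'
      by_contra hcon
      push Not at hcon
      obtain ⟨q1, q2⟩ := hcon
      have q1 := mul_left_cancel₀ hM' q1
      have q2 := mul_left_cancel₀ hM' q2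
      apply hk
      clear hne hk
      fin_cases k <;> fin_cases k' <;> simp [e0, e1] at q1 q2 ⊢ <;> linarith
  have hpow : ∀ d d' : S, d' ≠ d → ∀ x ∈ closedBall d.1.center d.1.radius,
      d'.1.radius ≤ dist x d'.1.center := by
    intro d d' hne x hx
    have h1 : d.1 ≠ d'.1 := fun h => hne (Subtype.ext h.symm)
    have h2 := hsep d.1 d.2 d'.1 d'.2 h1
    have h3 := dist_triangle_left d.1.center d'.1.center x
    rw [mem_closedBall] at hx
    linarith
  have hneg : ∀ (d : S) (k : Fin 4), ∀ x ∈ closedBall d.1.center d.1.radius,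
      F a b c (Sum.inr k) x ≤ 0 := by
    intro d k x hx
    have h1 := hin d.1 d.2 hx
    obtain ⟨p1, p2⟩ := h1
    rw [abs_le] at p1 p2
    rw [f2]
    apply mul_nonpos_of_nonneg_of_nonpos hM0.le
    fin_cases k <;> simp [e0, e1] <;> linarith
  have hball : ∀ d : S, closedBall d.1.center d.1.radius ⊆ cell a b c (Sum.inl d) := by
    intro d x hx j
    have hx' := hx
    rw [mem_closedBall] at hx'
    have hle : dist x d.1.center ^ 2 ≤ d.1.radius ^ 2 := by gcongr
    rcases j with d' | k
    · by_cases h : d' = d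
      · rw [h]
      · have h1 := hpow d d' h x hx
        have h2 : d'.1.radius ^ 2 ≤ dist x d'.1.center ^ 2 := by
          have := d'.1.radius_pos
          gcongr
        rw [f1, f1]; linarith
    · have := hneg d k x hx
      rw [f1]
      nlinarith [sq_nonneg (x 0), sq_nonneg (x 1)]
  have hcc : ∀ d : S, d.1.center ∈ ocell a b c (Sum.inl d) := by
    intro d j hj
    have hx : d.1.center ∈ closedBall d.1.center d.1.radius :=
      mem_closedBall_self d.1.radius_pos.le
    have hp : 0 < d.1.radius ^ 2 := pow_pos d.1.radius_pos 2
    rcases j with d' | k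
    · have h : d' ≠ d := fun h => hj (by rw [h])
      have h1 := hpow d d' h _ hx
      have h2 : d'.1.radius ^ 2 ≤ dist d.1.center d'.1.center ^ 2 := by
        have := d'.1.radius_pos
        gcongr
      rw [f1, f1, dist_self]; linarith
    · have := hneg d k _ hx
      rw [f1, dist_self]
      nlinarith [sq_nonneg (d.1.center 0), sq_nonneg (d.1.center 1)]
  have hbox : ∀ d : S, cell a b c (Sum.inl d) ⊆ square (R + 1) := by
    intro d x hx
    have hd1 := (hrad d.1 d.2).2
    have hd0 := d.1.radius_pos
    refine box_real R (d.1.center 0) (d.1.center 1) (x 0) (x 1) (F a b c (Sum.inl d) x) hR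
      (hcen d).1 (hcen d).2 ?_ ?_
    · simp only [F, a, b, c, Sum.elim_inl]
      nlinarith [sq_nonneg (d.1.center 0), sq_nonneg (d.1.center 1)]
    · intro k
      rw [← f2]
      exact hx _
  have hsqb : Bornology.IsBounded (square (R + 1)) := by
    rw [isBounded_iff_forall_norm_le]
    refine ⟨√((R + 1) ^ 2 + (R + 1) ^ 2), fun x hx => ?_⟩
    obtain ⟨h1, h2⟩ := hx
    rw [EuclideanSpace.norm_eq, Fin.sum_univ_two]
    apply sqrt_le_sqrt
    simp only [Real.norm_eq_abs]
    gcongr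
  have hocb : ∀ d : S, ocell a b c (Sum.inl d) ⊆ square (R + 1) := by
    intro d x hx
    apply hbox d
    intro j
    by_cases h : j = Sum.inl d
    · rw [h]
    · exact (hx j h).le
  have harea := fun d : S => cell_area a b c hinj (Sum.inl d) d.1.center d.1.radius
    d.1.radius_pos (hball d) (hcc d) (hsqb.subset (hbox d))
  choose n hn1 hn2 using harea
  set lam := 6 * tan (π / 6) - 7 * tan (π / 7) with hlam
  have hcell : ∀ d : S, 6 * tan (π / 6) * d.1.radius ^ 2 + lam * (6 - n d) ≤
      (volume (ocell a b c (Sum.inl d))).toReal := by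
    intro d
    obtain ⟨β, hb0, hb1, hb⟩ := cell_trig (n d) d.1.radius r hr (hrad d.1 d.2).1 (hrad d.1 d.2).2 hμ
    exact hb.trans (hn2 d β hb0 hb1)
  have hsum : ∑ d : S, (volume (ocell a b c (Sum.inl d))).toReal ≤ (2 * (R + 1)) ^ 2 := by
    have hfin : ∀ d : S, volume (ocell a b c (Sum.inl d)) ≠ ⊤ := fun d =>
      ((measure_mono (hocb d)).trans_lt hsqb.measure_lt_top).ne
    rw [← ENNReal.toReal_sum (fun d _ => hfin d)]
    have h1 : ∑ d : S, volume (ocell a b c (Sum.inl d)) =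
        volume (⋃ d : S, ocell a b c (Sum.inl d)) := by
      rw [measure_iUnion, tsum_fintype]
      · intro d d' hne
        exact ocell_disj a b c (fun h => hne (Sum.inl_injective h))
      · intro d; exact ocell_meas a b c _
    rw [h1]
    calc _ ≤ (volume (square (R + 1))).toReal :=
          ENNReal.toReal_mono hsqb.measure_lt_top.ne (measure_mono (Set.iUnion_subset hocb))
      _ = _ := by rw [volume_square _ (by linarith), ENNReal.toReal_ofReal (by positivity)]
  have hcorner := corner_count a b c hinj
  rw [Fintype.sum_sum_type, Fintype.card_sum, Fintype.card_fin, Fintype.card_coe] at hcorner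
  have hn : ∑ d : S, n d ≤ 6 * (S.card + 4) :=
    (Finset.sum_le_sum fun d _ => hn1 d).trans ((Nat.le_add_right _ _).trans hcorner)
  have hn' : (∑ d : S, (n d : ℝ)) ≤ 6 * (S.card + 4) := by exact_mod_cast hn
  have htot := (Finset.sum_le_sum fun (d : S) (_ : d ∈ Finset.univ) => hcell d).trans hsum
  rw [Finset.sum_add_distrib, ← Finset.mul_sum, ← Finset.mul_sum, Finset.sum_sub_distrib] at htot
  simp only [Finset.sum_const, Finset.card_univ, Fintype.card_coe, nsmul_eq_mul] at htot
  rw [Finset.sum_coe_sort S (fun d => d.radius ^ 2)] at htot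
  have hl : 0 ≤ lam := lam_nonneg
  nlinarith [mul_le_mul_of_nonneg_left hn' hl]

lemma six_tan : 6 * tan (π / 6) = √12 := by
  rw [tan_pi_div_six]
  have h3 : √12 = 2 * √3 := by
    rw [show (12 : ℝ) = 2 ^ 2 * 3 by norm_num, sqrt_mul (by norm_num), sqrt_sq (by norm_num)]
  rw [h3]
  have : (√3) ^ 2 = 3 := sq_sqrt (by norm_num)
  have h0 : 0 < √3 := by positivity
  field_simp
  rw [this]; norm_num

theorem density_bound (P : Set Disk) (r : ℝ) (hr : 0 < r) (hP : IsPacking P)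
    (hμ : 6 * tan (π / 6) - 7 * tan (π / 7) ≤ (5 * tan (π / 5) - 6 * tan (π / 6)) * r ^ 2)
    (hrad : ∀ d ∈ P, d.radius ∈ Set.Icc r 1) : density P ≤ π / √12 := by
  classical
  set lam := 6 * tan (π / 6) - 7 * tan (π / 7) with hlam
  have h12 : 0 < √12 := by positivity
  have key : ∀ R : ℝ, 0 ≤ R → (volume (packingUnion P ∩ square R)).toReal ≤
      π / √12 * ((2 * (R + 3)) ^ 2 + 24 * lam) := by
    intro R hR
    have hfb : ∀ S : Finset Disk, (S : Set Disk) ⊆ {d ∈ P | d.set ⊆ square (R + 2)} →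
        √12 * ∑ d ∈ S, d.radius ^ 2 ≤ (2 * (R + 3)) ^ 2 + 24 * lam := by
      intro S hS
      have := finite_bound S r hr hμ (fun d hd d' hd' => hP d (hS hd).1 d' (hS hd').1)
        (fun d hd => hrad d (hS hd).1) (R + 2) (by linarith) (fun d hd => (hS hd).2)
      rw [← six_tan]
      rw [show R + 3 = R + 2 + 1 by ring]
      exact this
    have hfin : {d ∈ P | d.set ⊆ square (R + 2)}.Finite := by
      by_contra hinf
      obtain ⟨N, hN⟩ := exists_nat_gt (((2 * (R + 3)) ^ 2 + 24 * lam) / (√12 * r ^ 2))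
      obtain ⟨S, hS, hcard⟩ := Set.Infinite.exists_subset_card_eq hinf N
      have h1 := hfb S hS
      have h2 : (N : ℝ) * r ^ 2 ≤ ∑ d ∈ S, d.radius ^ 2 := by
        rw [← hcard, ← nsmul_eq_mul]
        apply Finset.card_nsmul_le_sum
        intro d hd
        have := (hrad d (hS hd).1).1
        gcongr
      rw [div_lt_iff₀ (by positivity)] at hN
      nlinarith [mul_le_mul_of_nonneg_left h2 h12.le]
    set S := hfin.toFinset with hS
    have hSsub : (S : Set Disk) ⊆ {d ∈ P | d.set ⊆ square (R + 2)} := by simp [hS]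
    have hcov : packingUnion P ∩ square R ⊆ ⋃ d ∈ S, d.set := by
      rintro x ⟨hx, hxs⟩
      simp only [packingUnion, Set.mem_iUnion] at hx
      obtain ⟨d, hd, hxd⟩ := hx
      simp only [Set.mem_iUnion]
      refine ⟨d, ?_, hxd⟩
      rw [hS, Set.Finite.mem_toFinset]
      refine ⟨hd, fun y hy => ?_⟩
      have hd1 := (hrad d hd).2
      have hxy : dist y x ≤ 2 := by
        have h1 := dist_triangle_right y x d.center
        rw [Disk.set, mem_closedBall] at hxd hy
        linarith
      obtain ⟨p1, p2⟩ := hxs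
      have hsq := dist_sq y x
      have hd0 := dist_nonneg (x := y) (y := x)
      have hc : ∀ k : ℝ, k ^ 2 ≤ dist y x ^ 2 → |k| ≤ 2 := fun k hk =>
        (abs_le_of_sq_le_sq hk hd0).trans hxy
      have c0 := hc (y 0 - x 0) (by rw [hsq]; nlinarith [sq_nonneg (y 1 - x 1)])
      have c1 := hc (y 1 - x 1) (by rw [hsq]; nlinarith [sq_nonneg (y 0 - x 0)])
      rw [abs_le] at c0 c1 p1 p2
      exact ⟨abs_le.2 ⟨by linarith, by linarith⟩, abs_le.2 ⟨by linarith, by linarith⟩⟩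
    have hvol : volume (packingUnion P ∩ square R) ≤ ENNReal.ofReal (π * ∑ d ∈ S, d.radius ^ 2) := by
      calc _ ≤ volume (⋃ d ∈ S, d.set) := measure_mono hcov
        _ ≤ ∑ d ∈ S, volume d.set := measure_biUnion_finset_le _ _
        _ = ∑ d ∈ S, ENNReal.ofReal (π * d.radius ^ 2) := by
            refine Finset.sum_congr rfl fun d _ => ?_
            rw [Disk.set, EuclideanSpace.volume_closedBall_fin_two,
              ← ENNReal.ofReal_pow d.radius_pos.le, ← ENNReal.ofReal_mul (by positivity), mul_comm]
        _ = _ := by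
            rw [← ENNReal.ofReal_sum_of_nonneg (fun d _ => by positivity), Finset.mul_sum]
    calc _ ≤ π * ∑ d ∈ S, d.radius ^ 2 :=
          ENNReal.toReal_le_of_le_ofReal (by positivity) hvol
      _ = π / √12 * (√12 * ∑ d ∈ S, d.radius ^ 2) := by field_simp
      _ ≤ _ := by
          have := hfb S hSsub
          gcongr
  have hlim : Filter.Tendsto (fun R : ℝ => π / √12 * ((1 + 3 * R⁻¹) ^ 2 + 6 * lam * (R⁻¹) ^ 2))
      Filter.atTop (nhds (π / √12)) := by
    have h := tendsto_inv_atTop_zero (𝕜 := ℝ)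
    have : Filter.Tendsto (fun y : ℝ => π / √12 * ((1 + 3 * y) ^ 2 + 6 * lam * y ^ 2)) (nhds 0)
        (nhds (π / √12 * ((1 + 3 * 0) ^ 2 + 6 * lam * 0 ^ 2))) :=
      Continuous.tendsto (by fun_prop) 0
    have h2 := this.comp h
    have e : π / √12 * ((1 + 3 * 0) ^ 2 + 6 * lam * 0 ^ 2) = π / √12 := by ring
    rw [e] at h2
    exact h2
  have hev : ∀ᶠ R : ℝ in Filter.atTop,
      (volume (packingUnion P ∩ square R)).toReal / (4 * R ^ 2) ≤
        π / √12 * ((1 + 3 * R⁻¹) ^ 2 + 6 * lam * (R⁻¹) ^ 2) := by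
    filter_upwards [Filter.eventually_gt_atTop 0] with R hR
    rw [div_le_iff₀ (by positivity)]
    refine (key R hR.le).trans (le_of_eq ?_)
    field_simp
    ring
  unfold density
  rw [← hlim.limsup_eq]
  refine Filter.limsup_le_limsup hev ?_ hlim.isBoundedUnder_le
  apply Filter.IsCoboundedUnder.of_frequently_ge (a := 0)
  exact (Filter.Eventually.of_forall fun R => by positivity).frequently

end Main

end BlindAux

/-- Blind bound: a packing with all radii in `[r, 1]` which is denser
than the hexagonal compact packing satisfies
`r ≤ √((7 tan(π/7) − 6 tan(π/6))/(6 tan(π/6) − 5 tan(π/5)))`. -/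
theorem blind_uniformity_bound (r : ℝ) (h0 : 0 < r) (h1 : r ≤ 1)
    (P : Set Disk) (hP : IsPacking P)
    (hradii : ∀ d ∈ P, d.radius ∈ Set.Icc r 1)
    (hdense : Real.pi / Real.sqrt 12 < density P) :
    r ≤ Real.sqrt ((7 * Real.tan (Real.pi / 7) - 6 * Real.tan (Real.pi / 6)) /
          (6 * Real.tan (Real.pi / 6) - 5 * Real.tan (Real.pi / 5))) := by
  by_contra hcon
  push Not at hcon
  have hmu := BlindAux.mu_pos
  have h := (Real.sqrt_lt' h0).1 hcon
  rw [← neg_div_neg_eq, div_lt_iff₀ (by linarith)] at h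
  have := BlindAux.density_bound P r h0 hP (by nlinarith) hradii
  linarith
end
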